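/- Let n ≥ 2 and let (M,g) = (ℝ^n, g, o) be an asymptotically conical manifold with opening angle α ∈ (0,π/2) \ {arcsin(1/(2k+1)) : k ∈ ℕ} and asymptotic decay rate μ > 0, with proper exponential map at every point; let ε, κ be as in the context, fix a ∈ S^{n−1}, and for ρ > R_κ let Γ_ρ : [0, ℓ_g(Γ_ρ)] → M be the arc-length-parametrised min-max geodesic segment joining p = ρa and q = −ρa, with C_minmax := sup_{ρ>R_κ} dist(Γ_ρ, o) < ∞. For r > C_minmax and ρ > max{R_κ, r} set t⁻_{ρ,r} := min{t : |Γ_ρ(t)| = r} and t⁺_{ρ,r} := max{t : |Γ_ρ(t)| = r}. Then for every δ > 0 there exists R_δ ≥ max{R_κ, C_minmax} such that for all r > R_δ and all ρ > r, |Γ_ρ(t⁻_{ρ,r})/r − a| + |Γ_ρ(t⁺_{ρ,r})/r + a| ≤ δ; that is, the first entry and last exit points of Γ_ρ on the sphere of radius r asymptotically align with the antipodal directions a and −a, uniformly in ρ. -/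

import Mathlib

/-!
The alignment holds for every unit-speed geodesic from `ρ a` to `-ρ a` that enters a fixed ball, here
the ball of radius `max Rκ Cmm`, with constants depending only on `g` and that ball.

*Regularity.* Geodesics are given metrically, as curves locally realising `rdist g`. Such a curve is
locally Lipschitz, and comparing its energy with that of its Lipschitz variations (`first_variation`)
together with the du Bois-Reymond lemma (`dubois`) gives the weak Euler–Lagrange equation
(`momentum_ae`). Inverting the metric shows that the velocity is continuous, so that the curve is
`C¹`, has unit speed, and its momentum `g(γ̇, ·)` has the expected derivative (`geod_regular`).

*Momenta.* Write `ν ∈ (0, 1/2]` for a lowered decay exponent. On the cone, the radial momentum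
`g(γ̇, γ)` of a unit-speed geodesic has derivative `1`, and the rotational momenta `g(γ̇, Bγ)`, `B`
antisymmetric, are conserved. For `g`, far from the origin, the first derivative is at least `1/2` and
the second is `O(|γ|^(-ν))` (`pointwise_estimates`).

*Integration.* Let `s` be one plus the time remaining until the geodesic enters a fixed large ball.
The radial momentum shows that `|γ|` is comparable to `s`. Hence the rotational momenta are
`O(s^(1-ν))`, and the direction `γ/|γ|` moves with speed `O(s^(-1-ν))`. Integrating, the direction at
the first hit of the sphere of radius `r` differs from the starting direction by `O(r^(-ν))`,
uniformly in `ρ` (`barely_turns`, `first_hit_direction`). The last exit is the first hit of the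
reversed curve (`two_ended`).
-/

open scoped RealInnerProductSpace
open Real Set Filter

noncomputable section

/-- Euclidean `n`-space. -/
abbrev En (n : ℕ) : Type := EuclideanSpace ℝ (Fin n)

/-- A (pointwise) metric tensor on `ℝⁿ`: to each point it assigns a bilinear form,
recorded simply as an `ℝ`-valued function of two tangent vectors (tangent spaces being
identified with `ℝⁿ`). -/
abbrev MetricTensor (n : ℕ) : Type := En n → En n → En n → ℝ

/-- The standard cone metric `g_{C_α^n}` of opening angle `α`, written in Cartesian
coordinates on `ℝⁿ \ {0}`:  `g_{C_α^n} = (1 - sin²α)·dρ⊗dρ + sin²α·(euclidean metric)`,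
where `dρ(v) = ⟪v, x/‖x‖⟫`; this is `dρ⊗dρ + ρ² sin²α · g_{S^{n-1}}` in polar
coordinates. -/
def coneMetric (n : ℕ) (α : ℝ) : MetricTensor n := fun x v w =>
  (1 - Real.sin α ^ 2) * (⟪v, x⟫ * ⟪w, x⟫ / ‖x‖ ^ 2) + Real.sin α ^ 2 * ⟪v, w⟫

variable {n : ℕ}

/-- Length of a curve on `[a,b]` with respect to a metric tensor. -/
def clen (G : MetricTensor n) (γ : ℝ → En n) (a b : ℝ) : ℝ :=
  ∫ t in a..b, Real.sqrt (G (γ t) (deriv γ t) (deriv γ t))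

/-- Energy of a curve on `[a,b]` with respect to a metric tensor. -/
def cenergy (G : MetricTensor n) (γ : ℝ → En n) (a b : ℝ) : ℝ :=
  ∫ t in a..b, G (γ t) (deriv γ t) (deriv γ t)

/-- The Riemannian (length) distance induced by a metric tensor:
the infimum of lengths of `C¹` curves joining the two points. -/
def rdist (G : MetricTensor n) (x y : En n) : ℝ :=
  sInf {L : ℝ | ∃ γ : ℝ → En n, ContDiff ℝ 1 γ ∧ γ 0 = x ∧ γ 1 = y ∧ L = clen G γ 0 1}

/-- The intrinsic (induced length) distance of the subset `S` for the metric tensor `G`: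
the infimum of lengths of `C¹` curves joining the two points inside `S`. -/
def rdistIn (G : MetricTensor n) (S : Set (En n)) (x y : En n) : ℝ :=
  sInf {L : ℝ | ∃ γ : ℝ → En n, ContDiff ℝ 1 γ ∧ (∀ t ∈ Set.Icc (0:ℝ) 1, γ t ∈ S) ∧
    γ 0 = x ∧ γ 1 = y ∧ L = clen G γ 0 1}

/-- `γ`, restricted to the parameter set `I`, is a geodesic of the distance `d` with
constant speed `c`: locally it is a homothety of factor `c` (for `c = 1` this is a local
isometry, i.e. the arc-length parametrisation). -/
def IsGeodesicOn (d : En n → En n → ℝ) (γ : ℝ → En n) (c : ℝ) (I : Set ℝ) : Prop :=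
  ∀ t ∈ I, ∃ δ > 0, ∀ s ∈ I, ∀ u ∈ I, |s - t| < δ → |u - t| < δ →
    d (γ s) (γ u) = c * |s - u|

/-- A length-minimising geodesic segment from `p` to `q`, parametrised on `[0,1]`
with constant speed `d p q`. -/
def IsMinSeg (d : En n → En n → ℝ) (γ : ℝ → En n) (p q : En n) : Prop :=
  γ 0 = p ∧ γ 1 = q ∧
    ∀ s ∈ Set.Icc (0:ℝ) 1, ∀ u ∈ Set.Icc (0:ℝ) 1, d (γ s) (γ u) = d p q * |s - u|

/-- The distance of the standard cone `C_α^n`. -/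
def coneDist (n : ℕ) (α : ℝ) : En n → En n → ℝ := rdist (coneMetric n α)

/-- `(ℝⁿ, g)` is an asymptotically conical `C²` Riemannian manifold with opening
angle `α` and asymptotic decay rate `μ`: `g` is a complete `C²` Riemannian metric and
`A := g - g_{C_α^n}` has components whose derivatives of order `k ≤ 2` are
`O(|x|^{-μ-k})` at infinity. -/
structure IsAsympConical (n : ℕ) (g : MetricTensor n) (α μ : ℝ) : Prop where
  symm : ∀ x v w, g x v w = g x w v
  add_left : ∀ x v w u, g x (v + w) u = g x v u + g x w u
  smul_left : ∀ x (a : ℝ) v u, g x (a • v) u = a * g x v u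
  posdef : ∀ x v, v ≠ 0 → 0 < g x v v
  reg : ∀ i j : Fin n, ContDiff ℝ 2
    (fun x => g x (EuclideanSpace.single i 1) (EuclideanSpace.single j 1))
  decay : ∀ i j : Fin n, ∃ C R : ℝ, 0 < C ∧ ∀ x : En n, R ≤ ‖x‖ → ∀ k : ℕ, k ≤ 2 →
    ‖iteratedFDeriv ℝ k (fun y =>
        g y (EuclideanSpace.single i 1) (EuclideanSpace.single j 1) -
        coneMetric n α y (EuclideanSpace.single i 1) (EuclideanSpace.single j 1)) x‖ ≤
      C * ‖x‖ ^ (-μ - (k : ℝ))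
  complete : ∀ u : ℕ → En n,
    (∀ ε > 0, ∃ N, ∀ m ≥ N, ∀ k ≥ N, rdist g (u m) (u k) < ε) →
    ∃ x, ∀ ε > 0, ∃ N, ∀ m ≥ N, rdist g (u m) x < ε

/-- `ex` is the exponential map of the metric tensor `g` at the point `x`
(tangent spaces being identified with `ℝⁿ`): `ex v = γ_v(1)` where `γ_v` is the
constant-speed geodesic with `γ_v(0) = x`, `γ̇_v(0) = v`. -/
def IsExpAt (g : MetricTensor n) (x : En n) (ex : En n → En n) : Prop :=
  ∀ v : En n, ∃ γ : ℝ → En n, γ 0 = x ∧ deriv γ 0 = v ∧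
    IsGeodesicOn (rdist g) γ (Real.sqrt (g x v v)) Set.univ ∧ ex v = γ 1

/-- The exponential map of `g` exists and is proper at every point: preimages of
compact sets are compact. -/
def ProperExpAll (g : MetricTensor n) : Prop :=
  ∀ x : En n, ∃ ex : En n → En n, IsExpAt g x ex ∧
    ∀ K : Set (En n), IsCompact K → IsCompact (ex ⁻¹' K)

/-- Second variation of the energy of `γ` on `[a,b]` along the variation field `V`
(using the global chart to form the variation `γ + s·V`). -/
def secondVar (g : MetricTensor n) (γ V : ℝ → En n) (a b : ℝ) : ℝ :=
  iteratedDeriv 2 (fun s : ℝ => cenergy g (fun t => γ t + s • V t) a b) 0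

/-- The Morse index of `γ` on `[a,b]`, as a critical point of the energy, is at most
`m`: every linear space of `C¹` variation fields vanishing at the endpoints on which the
second variation of the energy is negative definite has dimension at most `m`. -/
def MorseIndexLEOn (g : MetricTensor n) (γ : ℝ → En n) (a b : ℝ) (m : ℕ) : Prop :=
  ∀ W : Submodule ℝ (ℝ → En n),
    (∀ V ∈ W, ContDiff ℝ 1 V ∧ V a = 0 ∧ V b = 0) →
    (∀ V ∈ W, V ≠ 0 → secondVar g γ V a b < 0) →
    Module.rank ℝ W ≤ (m : Cardinal)

end

noncomputable section

set_option maxSynthPendingDepth 3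

open MeasureTheory Topology

/-! ### Bilinear forms and lower bounds for the Riemannian distance -/

/-- Continuous bilinear forms on `ℝⁿ`. -/
abbrev Bil (n : ℕ) : Type := En n →L[ℝ] En n →L[ℝ] ℝ

/-- A field of bilinear forms, viewed as a metric tensor. -/
abbrev asTensor {n : ℕ} (G : En n → Bil n) : MetricTensor n := fun x v w => G x v w

lemma bil_cs {n : ℕ} (B : Bil n) (hs : ∀ v w, B v w = B w v) (hp : ∀ v, 0 ≤ B v v)
    (v w : En n) : (B v w) ^ 2 ≤ B v v * B w w := by
  have key : ∀ x : ℝ, 0 ≤ B w w * (x * x) + 2 * B v w * x + B v v := by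
    intro x
    have h := hp (v + x • w)
    simp only [map_add, map_smul, add_apply, smul_apply,
      smul_eq_mul] at h
    rw [hs w v] at h
    linarith
  have h := discrim_le_zero key
  unfold discrim at h
  nlinarith

lemma bil_sqrt_cs {n : ℕ} (B : Bil n) (hs : ∀ v w, B v w = B w v) (hp : ∀ v, 0 ≤ B v v)
    (v w : En n) : B v w ≤ √(B v v) * √(B w w) := by
  rw [← Real.sqrt_mul (hp v)]
  exact Real.le_sqrt_of_sq_le (bil_cs B hs hp v w)

lemma bil_sqrt_add {n : ℕ} (B : Bil n) (hs : ∀ v w, B v w = B w v) (hp : ∀ v, 0 ≤ B v v)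
    (v w : En n) : √(B (v + w) (v + w)) ≤ √(B v v) + √(B w w) := by
  apply Real.sqrt_le_iff.2
  refine ⟨by positivity, ?_⟩
  have h1 := bil_sqrt_cs B hs hp v w
  have h2 := Real.sq_sqrt (hp v)
  have h3 := Real.sq_sqrt (hp w)
  simp only [map_add, add_apply]
  rw [hs w v]
  nlinarith

lemma bil_le {n : ℕ} (B : Bil n) (v w : En n) : |B v w| ≤ ‖B‖ * ‖v‖ * ‖w‖ := by
  simpa using B.le_opNorm₂ v w

/-- A continuous field of positive definite forms is uniformly elliptic on bounded sets. -/
lemma exists_lower {n : ℕ} {G : En n → Bil n} (hG : Continuous G)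
    (hp : ∀ x v, v ≠ 0 → 0 < G x v v) (R : ℝ) :
    ∃ m > 0, ∀ x, ‖x‖ ≤ R → ∀ v, m * ‖v‖ ^ 2 ≤ G x v v := by
  have hK : IsCompact (Metric.closedBall (0 : En n) R ×ˢ Metric.sphere (0 : En n) 1) :=
    (isCompact_closedBall _ _).prod (isCompact_sphere _ _)
  have hc : Continuous (fun z : En n × En n => G z.1 z.2 z.2) := by fun_prop
  obtain ⟨m, hm, h⟩ := hK.exists_forall_le' hc.continuousOn (a := 0) (by
    rintro ⟨x, v⟩ ⟨_, hv⟩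
    apply hp
    rintro rfl
    simp at hv)
  refine ⟨m, hm, fun x hx v => ?_⟩
  rcases eq_or_ne v 0 with rfl | hv
  · simp
  have hv' : ‖v‖ ≠ 0 := norm_ne_zero_iff.2 hv
  have := h (x, ‖v‖⁻¹ • v) ⟨by simpa using hx, by simp [norm_smul, hv']⟩
  simp only [map_smul, smul_apply, smul_eq_mul] at this
  calc m * ‖v‖ ^ 2 ≤ (‖v‖⁻¹ * (‖v‖⁻¹ * G x v v)) * ‖v‖ ^ 2 := by gcongr
    _ = _ := by field_simp

lemma exists_upper {n : ℕ} {F : Type*} [NormedAddCommGroup F] {G : En n → F} (hG : Continuous G)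
    (R : ℝ) : ∃ M > 0, ∀ x, ‖x‖ ≤ R → ‖G x‖ ≤ M := by
  obtain ⟨C, hC⟩ := (isCompact_closedBall (0 : En n) R).exists_bound_of_continuousOn
    hG.continuousOn
  exact ⟨max C 1, by positivity, fun x hx => (hC x (by simpa using hx)).trans (le_max_left _ _)⟩

lemma clen_nonneg {n : ℕ} (G : MetricTensor n) (γ : ℝ → En n) {a b : ℝ} (hab : a ≤ b) :
    0 ≤ clen G γ a b :=
  intervalIntegral.integral_nonneg hab fun _ _ => Real.sqrt_nonneg _

lemma rdist_le {n : ℕ} (G : MetricTensor n) {γ : ℝ → En n} (hγ : ContDiff ℝ 1 γ) :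
    rdist G (γ 0) (γ 1) ≤ clen G γ 0 1 := by
  refine csInf_le ⟨0, ?_⟩ ⟨γ, hγ, rfl, rfl, rfl⟩
  rintro _ ⟨σ, -, -, -, rfl⟩
  exact clen_nonneg _ _ zero_le_one

lemma rdist_le_clen {n : ℕ} (G : En n → Bil n) {σ : ℝ → En n} (hσ : ContDiff ℝ 1 σ)
    {a b : ℝ} (hab : a < b) :
    rdist (asTensor G) (σ a) (σ b) ≤ clen (asTensor G) σ a b := by
  have h := rdist_le (asTensor G) (γ := fun t => σ (a + (b - a) * t)) (hσ.comp (by fun_prop))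
  simp only [mul_zero, add_zero, mul_one, add_sub_cancel] at h
  refine h.trans (le_of_eq ?_)
  have hd : ∀ t, deriv (fun t => σ (a + (b - a) * t)) t = (b - a) • deriv σ (a + (b - a) * t) := by
    intro t
    have h1 : HasDerivAt (fun t : ℝ => a + (b - a) * t) (b - a) t := by
      simpa using ((hasDerivAt_id t).const_mul (b - a)).const_add a
    exact ((hσ.differentiable one_ne_zero _).hasDerivAt.scomp t h1).deriv
  unfold clen
  simp only [hd]
  have h2 := intervalIntegral.smul_integral_comp_add_mul (a := 0) (b := 1)
    (fun t => √(G (σ t) (deriv σ t) (deriv σ t))) (b - a) a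
  simp only [mul_zero, add_zero, mul_one, add_sub_cancel] at h2
  rw [← h2, smul_eq_mul, ← intervalIntegral.integral_const_mul]
  congr 1
  ext t
  simp only [map_smul, smul_apply, smul_eq_mul]
  rw [← mul_assoc, Real.sqrt_mul (by nlinarith), Real.sqrt_mul_self (by linarith)]

lemma le_rdist {n : ℕ} (G : MetricTensor n) {x y : En n} {c : ℝ}
    (h : ∀ γ : ℝ → En n, ContDiff ℝ 1 γ → γ 0 = x → γ 1 = y → c ≤ clen G γ 0 1) :
    c ≤ rdist G x y := by
  refine le_csInf ⟨_, fun t => x + t • (y - x), by fun_prop, by simp, by simp, rfl⟩ ?_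
  rintro _ ⟨σ, h1, h2, h3, rfl⟩
  exact h σ h1 h2 h3

lemma continuous_speed {n : ℕ} {G : En n → Bil n} (hG : Continuous G) {σ : ℝ → En n}
    (hσ : ContDiff ℝ 1 σ) : Continuous fun t => √(G (σ t) (deriv σ t) (deriv σ t)) := by
  have h1 : Continuous (deriv σ) := hσ.continuous_deriv le_rfl
  have h2 : Continuous σ := hσ.continuous
  fun_prop

/-- A continuous function starting below `ρ` stays at most `ρ` up to a time `τ ∈ [0, 1]`, where it
equals `ρ` unless `τ = 1`. -/
lemma exit_time {σ : ℝ → ℝ} (hσ : Continuous σ) {ρ : ℝ} (h0 : σ 0 < ρ) :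
    ∃ τ ∈ Icc (0 : ℝ) 1, (∀ t ∈ Icc 0 τ, σ t ≤ ρ) ∧ (τ = 1 ∨ σ τ = ρ) := by
  by_cases h : ∀ t ∈ Icc (0 : ℝ) 1, σ t ≤ ρ
  · exact ⟨1, by simp, h, Or.inl rfl⟩
  push Not at h
  obtain ⟨t1, ht1, hlt⟩ := h
  have hK : IsCompact (Icc (0 : ℝ) 1 ∩ {t | ρ ≤ σ t}) :=
    isCompact_Icc.inter_right (isClosed_le continuous_const hσ)
  obtain ⟨τ, hτ⟩ := hK.exists_isLeast ⟨t1, ht1, hlt.le⟩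
  have hlow : ∀ t ∈ Icc 0 τ, t ≠ τ → σ t < ρ := by
    intro t ht hne
    by_contra hcon
    push Not at hcon
    have := hτ.2 ⟨⟨ht.1, ht.2.trans hτ.1.1.2⟩, hcon⟩
    exact hne (le_antisymm ht.2 this)
  have hτ0 : 0 < τ := by
    rcases hτ.1.1.1.eq_or_lt with h | h
    · have h3 := hτ.1.2
      rw [← h] at h3
      exact absurd h3 (not_le.2 h0)
    · exact h
  have hle : σ τ ≤ ρ := by
    have hcw : Tendsto σ (𝓝[<] τ) (𝓝 (σ τ)) := hσ.continuousAt.continuousWithinAt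
    refine le_of_tendsto hcw ?_
    filter_upwards [Ioo_mem_nhdsLT hτ0] with t ht
    exact (hlow t ⟨ht.1.le, ht.2.le⟩ ht.2.ne).le
  refine ⟨τ, hτ.1.1, fun t ht => ?_, Or.inr (le_antisymm hle hτ.1.2)⟩
  rcases eq_or_ne t τ with rfl | hne
  · exact hle
  · exact (hlow t ht hne).le

/-- If the constant form `B` is dominated by `G` on the ball of radius `ρ` about `x`, a curve leaving
`x` either stays in the ball, and is at least as long as the `B`-norm of its displacement, or has
length at least `√m ρ`. -/
lemma lower_rdist {n : ℕ} {G : En n → Bil n} (hG : Continuous G)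
    {x : En n} {ρ m : ℝ} (hρ : 0 < ρ) (B : Bil n)
    (hBs : ∀ v w, B v w = B w v) (hm : 0 < m) (hBm : ∀ v, m * ‖v‖ ^ 2 ≤ B v v)
    (hB : ∀ z, ‖z - x‖ ≤ ρ → ∀ v, B v v ≤ G z v v) (y : En n) :
    min (√(B (y - x) (y - x))) (√m * ρ) ≤ rdist (asTensor G) x y := by
  have hBp : ∀ v, 0 ≤ B v v := fun v => le_trans (by positivity) (hBm v)
  refine le_rdist _ fun σ hσ h0 h1 => ?_
  have hsd : Continuous (deriv σ) := hσ.continuous_deriv le_rfl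
  obtain ⟨τ, hτ, hin, hor⟩ := exit_time (σ := fun t => ‖σ t - x‖) (ρ := ρ)
    (by have := hσ.continuous; fun_prop) (by simpa [h0] using hρ)
  set w := σ τ - x with hw
  have hsp := continuous_speed hG hσ
  have hpart : √(B w w) ≤ clen (asTensor G) σ 0 1 := by
    have hI1 : (∫ t in (0:ℝ)..τ, √(G (σ t) (deriv σ t) (deriv σ t))) ≤
        clen (asTensor G) σ 0 1 := by
      unfold clen
      exact intervalIntegral.integral_mono_interval le_rfl hτ.1 hτ.2
        (Eventually.of_forall fun t => Real.sqrt_nonneg _) (hsp.intervalIntegrable _ _)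
    refine le_trans ?_ hI1
    rcases (Real.sqrt_nonneg (B w w)).eq_or_lt with hz | hpos
    · rw [← hz]
      exact intervalIntegral.integral_nonneg hτ.1 fun _ _ => Real.sqrt_nonneg _
    have hBint : ∫ t in (0:ℝ)..τ, B w (deriv σ t) = B w w := by
      rw [(B w).intervalIntegral_comp_comm (hsd.intervalIntegrable _ _),
        intervalIntegral.integral_deriv_eq_sub
          (fun t _ => hσ.differentiable one_ne_zero t) (hsd.intervalIntegrable _ _), h0]
    have hmono : ∫ t in (0:ℝ)..τ, B w (deriv σ t) ≤
        ∫ t in (0:ℝ)..τ, √(B w w) * √(G (σ t) (deriv σ t) (deriv σ t)) := by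
      refine intervalIntegral.integral_mono_on hτ.1
        (((B w).continuous.comp hsd).intervalIntegrable _ _)
        ((continuous_const.mul hsp).intervalIntegrable _ _) fun t ht => ?_
      refine (bil_sqrt_cs B hBs hBp _ _).trans ?_
      gcongr
      exact hB _ (hin t ht) _
    rw [hBint, intervalIntegral.integral_const_mul] at hmono
    nth_rewrite 1 [← Real.mul_self_sqrt (hBp w)] at hmono
    exact le_of_mul_le_mul_left hmono hpos
  refine le_trans ?_ hpart
  rcases hor with h | h
  · apply (min_le_left _ _).trans
    rw [hw, h, h1]
  · apply (min_le_right _ _).trans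
    have : √m * ρ = √(m * ρ ^ 2) := by
      rw [Real.sqrt_mul hm.le, Real.sqrt_sq hρ.le]
    rw [this, ← h]
    exact Real.sqrt_le_sqrt (hBm w)

/-! ### Distance-realising curves are Lipschitz with speed at most one -/

/-- The Euclidean inner product as a bilinear form. -/
def euclForm (n : ℕ) : Bil n := innerSL ℝ

lemma euclForm_apply {n : ℕ} (v w : En n) : euclForm n v w = ⟪v, w⟫ := rfl

/-- The Riemannian distance dominates the truncated Euclidean distance, locally uniformly. -/
lemma rdist_lower_local {n : ℕ} {G : En n → Bil n} (hG : Continuous G)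
    (hp : ∀ x v, v ≠ 0 → 0 < G x v v) (R : ℝ) :
    ∃ c > 0, ∀ x y, ‖x‖ ≤ R → c * min ‖y - x‖ 1 ≤ rdist (asTensor G) x y := by
  obtain ⟨m, hm, h⟩ := exists_lower hG hp (R + 1)
  refine ⟨√m, by positivity, fun x y hx => ?_⟩
  have := lower_rdist hG (x := x) (ρ := 1) (m := m) one_pos (m • euclForm n)
    (fun v w => by simp [euclForm_apply, real_inner_comm]) hm
    (fun v => by simp [euclForm_apply])
    (fun z hz v => by
      simp only [smul_apply, euclForm_apply, real_inner_self_eq_norm_sq, smul_eq_mul]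
      refine h z ?_ v
      calc ‖z‖ = ‖(z - x) + x‖ := by simp
        _ ≤ ‖z - x‖ + ‖x‖ := norm_add_le _ _
        _ ≤ R + 1 := by linarith) y
  refine le_trans (le_of_eq ?_) this
  simp only [smul_apply, euclForm_apply, real_inner_self_eq_norm_sq, smul_eq_mul]
  rw [Real.sqrt_mul hm.le, Real.sqrt_sq (norm_nonneg _), mul_min_of_nonneg _ _ (Real.sqrt_nonneg _)]

/-- Infinitesimally, the distance from `x` is bounded below by the norm of `G x`. -/
lemma rdist_lower_sharp {n : ℕ} {G : En n → Bil n} (hG : Continuous G)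
    (hs : ∀ x v w, G x v w = G x w v)
    (hp : ∀ x v, v ≠ 0 → 0 < G x v v) (x : En n) {c : ℝ} (hc0 : 0 < c) (hc : c < 1) :
    ∀ᶠ y in 𝓝 x, √(c * G x (y - x) (y - x)) ≤ rdist (asTensor G) x y := by
  obtain ⟨m, hm, h⟩ := exists_lower hG hp ‖x‖
  have hev : ∀ᶠ z in 𝓝 x, ‖G z - G x‖ ≤ (1 - c) * m := by
    have : Tendsto (fun z => ‖G z - G x‖) (𝓝 x) (𝓝 0) := by
      have h1 : Continuous fun z => ‖G z - G x‖ := by fun_prop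
      simpa using h1.tendsto x
    exact (this.eventually (gt_mem_nhds (mul_pos (sub_pos.2 hc) hm))).mono fun z hz => hz.le
  obtain ⟨ρ', hρ', hball⟩ := Metric.eventually_nhds_iff.1 hev
  have hlow := fun y => lower_rdist hG (x := x) (ρ := ρ' / 2) (m := c * m) (half_pos hρ') (c • G x)
    (fun v w => by simp [hs x v w]) (mul_pos hc0 hm)
    (fun v => by
      simp only [smul_apply, smul_eq_mul]
      rw [mul_assoc]
      exact mul_le_mul_of_nonneg_left (h x le_rfl v) hc0.le)
    (fun z hz v => by
      simp only [smul_apply, smul_eq_mul]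
      have h1 := hball (y := z) (by rw [dist_eq_norm]; linarith)
      have h2 := bil_le (G z - G x) v v
      have h3 := h x le_rfl v
      simp only [sub_apply] at h2
      have h4 := (abs_le.1 h2).1
      have h5 : ‖G z - G x‖ * ‖v‖ * ‖v‖ ≤ (1 - c) * G x v v := by
        calc _ = ‖G z - G x‖ * ‖v‖ ^ 2 := by ring
          _ ≤ (1 - c) * m * ‖v‖ ^ 2 := by gcongr
          _ = (1 - c) * (m * ‖v‖ ^ 2) := by ring
          _ ≤ _ := mul_le_mul_of_nonneg_left h3 (by linarith)
      linarith) y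
  have hnear : ∀ᶠ y in 𝓝 x, √(c * G x (y - x) (y - x)) ≤ √(c * m) * (ρ' / 2) := by
    have h1 : Continuous fun y => √(c * G x (y - x) (y - x)) := by fun_prop
    have h2 := h1.tendsto x
    simp only [sub_self, map_zero, mul_zero, Real.sqrt_zero] at h2
    have h3 : (0:ℝ) < √(c * m) * (ρ' / 2) := by positivity
    exact (h2.eventually (gt_mem_nhds h3)).mono fun z hz => hz.le
  filter_upwards [hnear] with y hy
  have := hlow y
  simp only [smul_apply, smul_eq_mul] at this
  rwa [min_eq_left hy] at this

/-- A distance-realising curve is Lipschitz for the Euclidean norm. -/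
lemma isom_lipschitz {n : ℕ} {G : En n → Bil n} (hG : Continuous G)
    (hp : ∀ x v, v ≠ 0 → 0 < G x v v) {γ : ℝ → En n} {a b : ℝ}
    (hγ : ∀ s ∈ Icc a b, ∀ u ∈ Icc a b, rdist (asTensor G) (γ s) (γ u) = |s - u|) :
    ∃ K, LipschitzOnWith K γ (Icc a b) := by
  have hcont : ContinuousOn γ (Icc a b) := by
    intro s hs
    obtain ⟨c, hc, h⟩ := rdist_lower_local hG hp ‖γ s‖
    rw [ContinuousWithinAt, tendsto_iff_norm_sub_tendsto_zero]
    have h1 : Tendsto (fun u => c⁻¹ * |s - u|) (𝓝[Icc a b] s) (𝓝 0) := by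
      have h2 : Continuous fun u : ℝ => c⁻¹ * |s - u| := by fun_prop
      have := h2.tendsto s
      simp only [sub_self, abs_zero, mul_zero] at this
      exact this.mono_left nhdsWithin_le_nhds
    refine squeeze_zero' (Eventually.of_forall fun _ => norm_nonneg _) ?_ h1
    filter_upwards [self_mem_nhdsWithin, h1.eventually (gt_mem_nhds one_pos)] with u hu hlt
    have h3 := h (γ s) (γ u) le_rfl
    rw [hγ s hs u hu] at h3
    have h4 : min ‖γ u - γ s‖ 1 ≤ c⁻¹ * |s - u| := by
      rw [inv_mul_eq_div, le_div_iff₀ hc]; linarith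
    rcases min_le_iff.1 h4 with h5 | h5
    · exact h5
    · linarith
  obtain ⟨R, hR⟩ := isCompact_Icc.exists_bound_of_continuousOn hcont
  obtain ⟨c, hc, h⟩ := rdist_lower_local hG hp R
  refine ⟨Real.toNNReal ((2 * R + 1) / c), LipschitzOnWith.of_dist_le_mul fun s hs u hu => ?_⟩
  have hR0 : 0 ≤ R := (norm_nonneg _).trans (hR s hs)
  rw [Real.coe_toNNReal _ (by positivity), dist_comm, dist_eq_norm, Real.dist_eq]
  have h3 := h (γ s) (γ u) (hR s hs)
  rw [hγ s hs u hu] at h3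
  have h4 : ‖γ u - γ s‖ ≤ 2 * R := (norm_sub_le _ _).trans (by linarith [hR s hs, hR u hu])
  have h5 : ‖γ u - γ s‖ ≤ (2 * R + 1) * min ‖γ u - γ s‖ 1 := by
    rcases le_total ‖γ u - γ s‖ 1 with h6 | h6
    · rw [min_eq_left h6]; nlinarith [norm_nonneg (γ u - γ s)]
    · rw [min_eq_right h6]; linarith
  calc _ ≤ (2 * R + 1) * min ‖γ u - γ s‖ 1 := h5
    _ ≤ (2 * R + 1) * (|s - u| / c) := by
      gcongr
      rw [le_div_iff₀ hc]; linarith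
    _ = _ := by ring

/-- A distance-realising curve has `G`-speed at most one wherever it is differentiable. -/
lemma isom_speed_le {n : ℕ} {G : En n → Bil n} (hG : Continuous G)
    (hs : ∀ x v w, G x v w = G x w v)
    (hp : ∀ x v, v ≠ 0 → 0 < G x v v) {γ : ℝ → En n} {a b : ℝ}
    (hγ : ∀ s ∈ Icc a b, ∀ u ∈ Icc a b, rdist (asTensor G) (γ s) (γ u) = |s - u|)
    {t : ℝ} (ht : t ∈ Ioo a b) {v : En n} (hv : HasDerivAt γ v t) : G (γ t) v v ≤ 1 := by
  have key : ∀ c ∈ Ioo (0:ℝ) 1, c * G (γ t) v v ≤ 1 := by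
    intro c hc
    have h1 := hv.continuousAt.eventually (rdist_lower_sharp hG hs hp (γ t) hc.1 hc.2)
    have h2 : Tendsto (fun u => c * G (γ t) (slope γ t u) (slope γ t u)) (𝓝[≠] t)
        (𝓝 (c * G (γ t) v v)) := by
      have h3 : Continuous fun w => c * G (γ t) w w := by fun_prop
      exact (h3.tendsto v).comp (hasDerivAt_iff_tendsto_slope.1 hv)
    refine le_of_tendsto h2 ?_
    filter_upwards [nhdsWithin_le_nhds h1, self_mem_nhdsWithin,
      nhdsWithin_le_nhds (Ioo_mem_nhds ht.1 ht.2)] with u hu hne hmem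
    rw [hγ t ⟨ht.1.le, ht.2.le⟩ u ⟨hmem.1.le, hmem.2.le⟩, Real.sqrt_le_iff] at hu
    have hne' : u - t ≠ 0 := sub_ne_zero.2 hne
    have hpos : 0 < (u - t) ^ 2 := by positivity
    rw [slope_def_module]
    simp only [map_smul, smul_apply, smul_eq_mul]
    have h5 := hu.2
    rw [sq_abs] at h5
    calc _ = (c * G (γ t) (γ u - γ t) (γ u - γ t)) / (u - t) ^ 2 := by field_simp
      _ ≤ 1 := by rw [div_le_one hpos]; linarith [sq_nonneg (u - t), show (t - u)^2 = (u-t)^2 by ring]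
  by_contra hcon
  push Not at hcon
  have hpos : 0 < G (γ t) v v := by linarith
  obtain ⟨c, hc1, hc2⟩ := exists_between (show (G (γ t) v v)⁻¹ < 1 from inv_lt_one_of_one_lt₀ hcon)
  have := key c ⟨lt_trans (by positivity) hc1, hc2⟩
  rw [inv_lt_iff_one_lt_mul₀ hpos] at hc1
  linarith

/-- A Lipschitz curve is the integral of its almost everywhere defined derivative. -/
lemma lipschitz_ftc {n : ℕ} {γ : ℝ → En n} {K : NNReal} (hγ : LipschitzWith K γ) (a t : ℝ) :
    γ t = γ a + ∫ s in a..t, deriv γ s := by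
  have hbd : ∀ s, ‖deriv γ s‖ ≤ K := fun s => norm_deriv_le_of_lipschitz hγ
  have hloc : LocallyIntegrable (deriv γ) volume := by
    have h : LocallyIntegrable (fun _ : ℝ => (K : ℝ)) volume := locallyIntegrable_const _
    exact h.mono (stronglyMeasurable_deriv γ).aestronglyMeasurable
      (Eventually.of_forall fun s => by simpa using hbd s)
  have hii : ∀ x y, IntervalIntegrable (deriv γ) volume x y := fun x y =>
    (hloc.integrableOn_isCompact isCompact_uIcc).intervalIntegrable
  have hL : LipschitzWith (K + K) (fun t => γ t - ∫ s in a..t, deriv γ s) := by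
    apply hγ.sub
    refine LipschitzWith.of_dist_le_mul fun x y => ?_
    rw [dist_eq_norm, intervalIntegral.integral_interval_sub_left (hii _ _) (hii _ _), dist_comm, Real.dist_eq, abs_sub_comm]
    refine (intervalIntegral.norm_integral_le_of_norm_le_const fun s _ => hbd s).trans ?_
    rw [abs_sub_comm]
  obtain ⟨C, hC⟩ := (hL.lipschitzOnWith (s := uIcc a t)).absolutelyContinuousOnInterval.const_of_ae_hasDerivAt_zero (by
    filter_upwards [hγ.ae_differentiableAt_real, _root_.LocallyIntegrable.ae_hasDerivAt_integral hloc] with x h1 h2 _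
    simpa using h1.hasDerivAt.fun_sub (h2 a))
  have h1 := hC a (by simp)
  have h2 := hC t (by simp)
  simp only [intervalIntegral.integral_same, sub_zero] at h1
  rw [h1, ← h2]; simp

/-! ### Upper bound for the distance by the length of Lipschitz curves -/

lemma bdd_intervalIntegrable {F : Type*} [NormedAddCommGroup F] {f : ℝ → F} {a b C : ℝ}
    (hf : AEStronglyMeasurable f volume) (hC : ∀ t ∈ uIoc a b, ‖f t‖ ≤ C) :
    IntervalIntegrable f volume a b := by
  rw [intervalIntegrable_iff]
  refine Measure.integrableOn_of_bounded (M := C) (by simp) hf ?_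
  rw [ae_restrict_iff' measurableSet_uIoc]
  exact Eventually.of_forall hC

/-- The distance is at most the length of a curve with bounded measurable velocity `w`: the infimum
defining `rdist` runs over `C¹` curves only, so `w` is approximated in `L¹` by continuous
velocities. -/
lemma rdist_le_ac {n : ℕ} {G : En n → Bil n} (hG : Continuous G)
    (hs : ∀ x v w, G x v w = G x w v) (hp : ∀ x v, 0 ≤ G x v v)
    {w : ℝ → En n} (hw : AEStronglyMeasurable w volume) {K : ℝ} (hK : ∀ t, ‖w t‖ ≤ K)
    {a b : ℝ} (hab : a < b) {η : ℝ → En n} (hη : ∀ t ∈ Icc a b, η t = η a + ∫ s in a..t, w s)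
    (hηc : Continuous η) :
    rdist (asTensor G) (η a) (η b) ≤ ∫ t in a..b, √(G (η t) (w t) (w t)) := by
  have hK0 : 0 ≤ K := (norm_nonneg _).trans (hK 0)
  have hba : 0 < b - a := sub_pos.2 hab
  have hwi : ∀ x y, IntervalIntegrable w volume x y := fun x y =>
    bdd_intervalIntegrable hw fun t _ => hK t
  obtain ⟨R, hR⟩ := (isCompact_Icc (a := a) (b := b)).exists_bound_of_continuousOn
    hηc.continuousOn
  obtain ⟨M, hM, hGM⟩ := exists_upper hG (R + 1)
  have hspeed : IntervalIntegrable (fun t => √(G (η t) (w t) (w t))) volume a b := by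
    have hc : Continuous fun z : En n × En n => √(G z.1 z.2 z.2) := by fun_prop
    refine bdd_intervalIntegrable (C := √(M * K * K))
      (hc.comp_aestronglyMeasurable (hηc.aestronglyMeasurable.prodMk hw)) fun t ht => ?_
    rw [uIoc_of_le hab.le] at ht
    rw [Real.norm_of_nonneg (Real.sqrt_nonneg _)]
    apply Real.sqrt_le_sqrt
    refine (le_abs_self _).trans ((bil_le _ _ _).trans ?_)
    have h1 := hGM (η t) ((hR t ⟨ht.1.le, ht.2⟩).trans (by linarith))
    have h2 := hK t
    gcongr
  refine le_of_forall_pos_le_add fun ε hε => ?_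
  obtain ⟨τ, hτ, hτ'⟩ : ∃ τ > 0, τ * K * (b - a) ≤ ε / 2 := by
    refine ⟨ε / 2 / (K * (b - a) + 1), by positivity, ?_⟩
    rw [div_mul_eq_mul_div, div_mul_eq_mul_div, div_le_iff₀ (by positivity)]
    nlinarith [mul_nonneg hK0 hba.le]
  have huc := (isCompact_closedBall (0 : En n) (R + 1)).uniformContinuousOn_of_continuous
    hG.continuousOn
  rw [Metric.uniformContinuousOn_iff] at huc
  obtain ⟨δ, hδ, huc⟩ := huc (τ ^ 2) (by positivity)
  obtain ⟨κ, hκ, hκ1, hκδ, hκε⟩ : ∃ κ > 0, 2 * κ ≤ 1 ∧ 2 * κ < δ ∧ √M * (2 * κ) ≤ ε / 2 := by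
    refine ⟨min (1/2) (min (δ / 4) (ε / 4 / (√M + 1))), by positivity, ?_, ?_, ?_⟩
    · linarith [min_le_left (1/2) (min (δ / 4) (ε / 4 / (√M + 1)))]
    · have := (min_le_right (1/2) (min (δ / 4) (ε / 4 / (√M + 1)))).trans (min_le_left _ _)
      linarith
    · have h := (min_le_right (1/2) (min (δ / 4) (ε / 4 / (√M + 1)))).trans (min_le_right _ _)
      rw [le_div_iff₀ (by positivity)] at h
      have h0 : (0:ℝ) ≤ min (1/2) (min (δ / 4) (ε / 4 / (√M + 1))) := by positivity
      nlinarith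
  have hfi : Integrable ((Ioc a b).indicator w) volume := by
    rw [integrable_indicator_iff measurableSet_Ioc]
    exact (intervalIntegrable_iff_integrableOn_Ioc_of_le hab.le).1 (hwi a b)
  obtain ⟨h, -, hh, hhc, hhi⟩ := hfi.exists_hasCompactSupport_integral_sub_le hκ
  have hwh : ∫ t in a..b, ‖w t - h t‖ ≤ κ := by
    refine le_trans ?_ hh
    rw [intervalIntegral.integral_of_le hab.le]
    calc ∫ t in Ioc a b, ‖w t - h t‖ = ∫ t in Ioc a b, ‖(Ioc a b).indicator w t - h t‖ := by
          refine setIntegral_congr_fun measurableSet_Ioc fun t ht => ?_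
          simp only [indicator_of_mem ht]
      _ ≤ _ := setIntegral_le_integral (hfi.sub hhi).norm (Eventually.of_forall fun _ => norm_nonneg _)
  have hhi' : ∀ x y, IntervalIntegrable h volume x y := fun x y => hhc.intervalIntegrable _ _
  set e := ∫ t in a..b, (h t - w t) with he
  have hen : ‖e‖ ≤ κ := by
    refine (intervalIntegral.norm_integral_le_integral_norm hab.le).trans ?_
    simpa only [norm_sub_rev] using hwh
  set k : ℝ → En n := fun t => h t - (b - a)⁻¹ • e with hk
  have hkc : Continuous k := by fun_prop
  have hki : ∀ x y, IntervalIntegrable k volume x y := fun x y => hkc.intervalIntegrable _ _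
  have hnorm_int : IntervalIntegrable (fun t => ‖k t - w t‖) volume a b :=
    ((hki a b).sub (hwi a b)).norm
  have hkw : ∫ t in a..b, ‖k t - w t‖ ≤ 2 * κ := by
    have h1 : ∫ t in a..b, ‖k t - w t‖ ≤ ∫ t in a..b, (‖w t - h t‖ + (b - a)⁻¹ * ‖e‖) := by
      refine intervalIntegral.integral_mono_on hab.le hnorm_int
        (((hwi a b).sub (hhi' a b)).norm.add intervalIntegrable_const) fun t _ => ?_
      calc ‖k t - w t‖ = ‖(h t - w t) - (b - a)⁻¹ • e‖ := by simp only [hk]; congr 1; abel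
        _ ≤ ‖h t - w t‖ + ‖(b - a)⁻¹ • e‖ := norm_sub_le _ _
        _ = _ := by rw [norm_sub_rev, norm_smul, Real.norm_of_nonneg (by positivity)]
    rw [intervalIntegral.integral_add ((hwi a b).sub (hhi' a b)).norm intervalIntegrable_const,
      intervalIntegral.integral_const, smul_eq_mul, mul_inv_cancel_left₀ hba.ne'] at h1
    linarith
  set σ : ℝ → En n := fun t => η a + ∫ s in a..t, k s with hσ
  have hσd : ∀ t, HasDerivAt σ (k t) t := fun t =>
    (intervalIntegral.integral_hasDerivAt_right (hki a t)
      hkc.aestronglyMeasurable.stronglyMeasurableAtFilter hkc.continuousAt).const_add _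
  have hderiv : deriv σ = k := funext fun t => (hσd t).deriv
  have hσC : ContDiff ℝ 1 σ :=
    contDiff_one_iff_deriv.2 ⟨fun t => (hσd t).differentiableAt, by rw [hderiv]; exact hkc⟩
  have hσa : σ a = η a := by simp [hσ]
  have hσb : σ b = η b := by
    rw [hη b ⟨hab.le, le_rfl⟩]
    simp only [hσ, hk]
    congr 1
    rw [intervalIntegral.integral_sub (hhi' a b) intervalIntegrable_const,
      intervalIntegral.integral_const, smul_smul, mul_inv_cancel₀ hba.ne', one_smul, he,
      intervalIntegral.integral_sub (hhi' a b) (hwi a b)]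
    abel
  have hclose : ∀ t ∈ Icc a b, ‖σ t - η t‖ ≤ 2 * κ := by
    intro t ht
    rw [hη t ht]
    simp only [hσ, add_sub_add_left_eq_sub]
    rw [← intervalIntegral.integral_sub (hki a t) (hwi a t)]
    refine (intervalIntegral.norm_integral_le_integral_norm ht.1).trans (le_trans ?_ hkw)
    exact intervalIntegral.integral_mono_interval le_rfl ht.1 ht.2
      (Eventually.of_forall fun _ => norm_nonneg _) hnorm_int
  have hmain := rdist_le_clen G hσC hab
  rw [hσa, hσb] at hmain
  refine hmain.trans ?_
  have hpt : clen (asTensor G) σ a b ≤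
      ∫ t in a..b, (√(G (η t) (w t) (w t)) + √M * ‖k t - w t‖ + τ * K) := by
    unfold clen
    refine intervalIntegral.integral_mono_on hab.le
      ((continuous_speed hG hσC).intervalIntegrable _ _)
      ((hspeed.add (hnorm_int.const_mul _)).add intervalIntegrable_const) fun t ht => ?_
    rw [hderiv]
    have hηR := hR t ht
    have hcl := hclose t ht
    have hσR : ‖σ t‖ ≤ R + 1 := by
      calc ‖σ t‖ = ‖(σ t - η t) + η t‖ := by simp
        _ ≤ _ := norm_add_le _ _
        _ ≤ _ := by linarith
    have hτt : ‖G (σ t) - G (η t)‖ ≤ τ ^ 2 := by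
      rw [← dist_eq_norm]
      refine (huc _ (by simpa using hσR) _ (by simp; linarith) ?_).le
      rw [dist_eq_norm]; linarith
    have e1 : √(G (σ t) (k t) (k t)) ≤
        √(G (σ t) (w t) (w t)) + √(G (σ t) (k t - w t) (k t - w t)) := by
      simpa using bil_sqrt_add (G (σ t)) (hs _) (hp _) (w t) (k t - w t)
    have e2 : √(G (σ t) (k t - w t) (k t - w t)) ≤ √M * ‖k t - w t‖ := by
      rw [← Real.sqrt_sq (norm_nonneg (k t - w t)), ← Real.sqrt_mul hM.le]
      apply Real.sqrt_le_sqrt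
      refine (le_abs_self _).trans ((bil_le _ _ _).trans ?_)
      rw [mul_assoc, ← sq]
      gcongr
      exact hGM _ hσR
    have e3 : √(G (σ t) (w t) (w t)) ≤ √(G (η t) (w t) (w t)) + τ * K := by
      apply Real.sqrt_le_iff.2
      refine ⟨by positivity, ?_⟩
      have h1 := bil_le (G (σ t) - G (η t)) (w t) (w t)
      simp only [sub_apply] at h1
      have h2 := (abs_le.1 h1).2
      have h3 : ‖G (σ t) - G (η t)‖ * ‖w t‖ * ‖w t‖ ≤ τ ^ 2 * K * K := by
        have := hK t
        gcongr
      have h4 := Real.sq_sqrt (hp (η t) (w t))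
      have h5 : 0 ≤ √(G (η t) (w t) (w t)) * (τ * K) := by positivity
      nlinarith
    linarith
  refine hpt.trans ?_
  rw [intervalIntegral.integral_add (hspeed.add (hnorm_int.const_mul _)) intervalIntegrable_const,
    intervalIntegral.integral_add hspeed (hnorm_int.const_mul _),
    intervalIntegral.integral_const_mul, intervalIntegral.integral_const, smul_eq_mul]
  have : √M * (∫ t in a..b, ‖k t - w t‖) ≤ √M * (2 * κ) := by gcongr
  nlinarith

/-! ### First variation of the energy -/

/-- The energy integrand of the variation `γ + s φ`, with velocities `w + s ψ`, as a continuous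
function of `(s, γ, φ, w, ψ)`. -/
def varInt {n : ℕ} (G : En n → Bil n) (s : ℝ) (x y v z : En n) : ℝ :=
  G (x + s • y) (v + s • z) (v + s • z)

/-- The derivative of `varInt` in the variation parameter. -/
def varInt' {n : ℕ} (G : En n → Bil n) (s : ℝ) (x y v z : En n) : ℝ :=
  (fderiv ℝ G (x + s • y) y (v + s • z) + G (x + s • y) z) (v + s • z)
      + G (x + s • y) (v + s • z) z

lemma varInt_hasDerivAt {n : ℕ} {G : En n → Bil n} (hG : ContDiff ℝ 1 G) (s : ℝ) (x y v z : En n) :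
    HasDerivAt (fun s => varInt G s x y v z) (varInt' G s x y v z) s := by
  have h1 : HasDerivAt (fun s : ℝ => x + s • y) y s := by
    simpa using ((hasDerivAt_id s).smul_const y).const_add x
  have h2 : HasDerivAt (fun s : ℝ => v + s • z) z s := by
    simpa using ((hasDerivAt_id s).smul_const z).const_add v
  have h3 : HasDerivAt (fun s : ℝ => G (x + s • y)) (fderiv ℝ G (x + s • y) y) s :=
    ((hG.differentiable one_ne_zero _).hasFDerivAt).comp_hasDerivAt s h1
  exact (h3.clm_apply h2).clm_apply h2

lemma bdd_comp_aux {n : ℕ} {Q : ℝ × En n × En n × En n × En n → ℝ} (hQ : Continuous Q)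
    {γ φ w ψ : ℝ → En n} (hγ : Continuous γ) (hφ : Continuous φ) {K C : ℝ}
    (hwK : ∀ t, ‖w t‖ ≤ K) (hC : ∀ t, ‖ψ t‖ ≤ C) (a b S : ℝ) :
    ∃ B, ∀ s, |s| ≤ S → ∀ t ∈ Icc a b, ‖Q (s, γ t, φ t, w t, ψ t)‖ ≤ B := by
  obtain ⟨R1, hR1⟩ := (isCompact_Icc (a := a) (b := b)).exists_bound_of_continuousOn
    hγ.continuousOn
  obtain ⟨R2, hR2⟩ := (isCompact_Icc (a := a) (b := b)).exists_bound_of_continuousOn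
    hφ.continuousOn
  obtain ⟨B, hB⟩ := (isCompact_closedBall (0 : ℝ × En n × En n × En n × En n)
    (max S (max R1 (max R2 (max K C))))).exists_bound_of_continuousOn hQ.continuousOn
  refine ⟨B, fun s hs t ht => hB _ ?_⟩
  rw [mem_closedBall_zero_iff]
  simp only [Prod.norm_def, Real.norm_eq_abs]
  exact max_le_max hs (max_le_max (hR1 t ht) (max_le_max (hR2 t ht) (max_le_max (hwK t) (hC t))))

lemma varInt_continuous {n : ℕ} {G : En n → Bil n} (hG : ContDiff ℝ 1 G) :
    Continuous (fun z : ℝ × En n × En n × En n × En n =>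
      varInt G z.1 z.2.1 z.2.2.1 z.2.2.2.1 z.2.2.2.2) := by
  have hGc : Continuous G := hG.continuous
  unfold varInt; fun_prop

lemma varInt'_continuous {n : ℕ} {G : En n → Bil n} (hG : ContDiff ℝ 1 G) :
    Continuous (fun z : ℝ × En n × En n × En n × En n =>
      varInt' G z.1 z.2.1 z.2.2.1 z.2.2.2.1 z.2.2.2.2) := by
  have hGc : Continuous G := hG.continuous
  have hDc : Continuous (fderiv ℝ G) := hG.continuous_fderiv one_ne_zero
  unfold varInt'; fun_prop

lemma varInt_meas {n : ℕ} {Q : ℝ × En n × En n × En n × En n → ℝ} (hQ : Continuous Q)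
    {γ φ w ψ : ℝ → En n} (hγ : Continuous γ) (hφ : Continuous φ)
    (hw : AEStronglyMeasurable w volume) (hψ : AEStronglyMeasurable ψ volume) (s : ℝ) :
    AEStronglyMeasurable (fun t => Q (s, γ t, φ t, w t, ψ t)) volume :=
  hQ.comp_aestronglyMeasurable (aestronglyMeasurable_const.prodMk (hγ.aestronglyMeasurable.prodMk
      (hφ.aestronglyMeasurable.prodMk (hw.prodMk hψ))))

lemma mem_Icc_of_uIoc {a b t : ℝ} (hab : a ≤ b) (ht : t ∈ uIoc a b) : t ∈ Icc a b := by
  rw [uIoc_of_le hab] at ht; exact ⟨ht.1.le, ht.2⟩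

lemma varInt_integrable {n : ℕ} {G : En n → Bil n} (hG : ContDiff ℝ 1 G)
    {γ φ w ψ : ℝ → En n} (hγ : Continuous γ) (hφ : Continuous φ)
    (hw : AEStronglyMeasurable w volume) (hψ : AEStronglyMeasurable ψ volume) {K C : ℝ}
    (hwK : ∀ t, ‖w t‖ ≤ K) (hC : ∀ t, ‖ψ t‖ ≤ C) {a b : ℝ} (hab : a ≤ b) (s : ℝ) :
    IntervalIntegrable (fun t => varInt G s (γ t) (φ t) (w t) (ψ t)) volume a b := by
  obtain ⟨B, hB⟩ := bdd_comp_aux (varInt_continuous hG) hγ hφ hwK hC a b |s|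
  exact bdd_intervalIntegrable (varInt_meas (varInt_continuous hG) hγ hφ hw hψ s)
    fun t ht => hB s le_rfl t (mem_Icc_of_uIoc hab ht)

/-- Differentiation under the integral sign for the energy of a variation. -/
lemma energy_hasDerivAt {n : ℕ} {G : En n → Bil n} (hG : ContDiff ℝ 1 G)
    {γ φ w ψ : ℝ → En n} (hγ : Continuous γ) (hφ : Continuous φ)
    (hw : AEStronglyMeasurable w volume) (hψ : AEStronglyMeasurable ψ volume) {K C : ℝ}
    (hwK : ∀ t, ‖w t‖ ≤ K) (hC : ∀ t, ‖ψ t‖ ≤ C) {a b : ℝ} (hab : a ≤ b) :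
    HasDerivAt (fun s => ∫ t in a..b, varInt G s (γ t) (φ t) (w t) (ψ t))
      (∫ t in a..b, varInt' G 0 (γ t) (φ t) (w t) (ψ t)) 0 := by
  obtain ⟨B, hB⟩ := bdd_comp_aux (varInt'_continuous hG) hγ hφ hwK hC a b 1
  exact (intervalIntegral.hasDerivAt_integral_of_dominated_loc_of_deriv_le
    (μ := volume) (a := a) (b := b) (F := fun s t => varInt G s (γ t) (φ t) (w t) (ψ t))
    (F' := fun s t => varInt' G s (γ t) (φ t) (w t) (ψ t)) (x₀ := 0) (s := Metric.ball 0 1)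
    (bound := fun _ => B) (Metric.ball_mem_nhds _ one_pos)
    (Eventually.of_forall fun s => (varInt_meas (varInt_continuous hG) hγ hφ hw hψ s).restrict)
    (varInt_integrable hG hγ hφ hw hψ hwK hC hab 0)
    (varInt_meas (varInt'_continuous hG) hγ hφ hw hψ 0).restrict
    (Eventually.of_forall fun t ht s hs' => hB s (by
      rw [Metric.mem_ball, dist_zero_right, Real.norm_eq_abs] at hs'; exact hs'.le) t
      (mem_Icc_of_uIoc hab ht))
    intervalIntegrable_const
    (Eventually.of_forall fun t _ s _ => varInt_hasDerivAt hG s _ _ _ _)).2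

/-- Cauchy–Schwarz in the form `√h ≤ (h + 1) / 2`, integrated: length bounds energy. -/
lemma energy_ge {h : ℝ → ℝ} {a b : ℝ} (hab : a < b) (h0 : ∀ t, 0 ≤ h t)
    (hm : AEStronglyMeasurable h volume)
    (hi : IntervalIntegrable h volume a b) (h1 : b - a ≤ ∫ t in a..b, √(h t)) :
    b - a ≤ ∫ t in a..b, h t := by
  have hsqi : IntervalIntegrable (fun t => √(h t)) volume a b := by
    refine (hi.add (intervalIntegrable_const (c := (1:ℝ)))).mono_fun
      (Real.continuous_sqrt.comp_aestronglyMeasurable hm).restrict ?_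
    refine Eventually.of_forall fun t => ?_
    have hnn := h0 t
    change ‖√(h t)‖ ≤ ‖h t + 1‖
    rw [Real.norm_of_nonneg (Real.sqrt_nonneg _), Real.norm_of_nonneg (by positivity)]
    apply Real.sqrt_le_iff.2
    constructor <;> nlinarith
  have h2 : ∫ t in a..b, √(h t) ≤ ∫ t in a..b, (h t + 1) / 2 := by
    refine intervalIntegral.integral_mono_on hab.le hsqi
      ((hi.add intervalIntegrable_const).div_const 2) fun t _ => ?_
    have hnn := h0 t
    nlinarith [Real.sq_sqrt hnn, sq_nonneg (√(h t) - 1)]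
  rw [intervalIntegral.integral_div, intervalIntegral.integral_add hi
    intervalIntegrable_const, intervalIntegral.integral_const, smul_eq_mul, mul_one] at h2
  linarith

/-- A variation with fixed endpoints of a minimising segment has energy at least that of the
segment. -/
lemma variation_energy_ge {n : ℕ} {G : En n → Bil n} (hG : ContDiff ℝ 1 G)
    (hs : ∀ x v w, G x v w = G x w v) (hp0 : ∀ x v, 0 ≤ G x v v)
    {γ : ℝ → En n} {K : NNReal} (hL : LipschitzWith K γ) {a b : ℝ} (hab : a < b)
    (hγ : rdist (asTensor G) (γ a) (γ b) = b - a)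
    {ψ : ℝ → En n} (hψ : AEStronglyMeasurable ψ volume) {C : ℝ} (hC : ∀ t, ‖ψ t‖ ≤ C)
    (hψ0 : ∫ t in a..b, ψ t = 0) (s : ℝ) :
    b - a ≤ ∫ t in a..b, varInt G s (γ t) (∫ s in a..t, ψ s) (deriv γ t) (ψ t) := by
  have hGc : Continuous G := hG.continuous
  have hψi : ∀ x y, IntervalIntegrable ψ volume x y := fun x y =>
    bdd_intervalIntegrable hψ fun t _ => hC t
  have hφc : Continuous (fun t => ∫ s in a..t, ψ s) := intervalIntegral.continuous_primitive hψi a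
  have hwm : AEStronglyMeasurable (deriv γ) volume :=
    (stronglyMeasurable_deriv γ).aestronglyMeasurable
  have hwK : ∀ t, ‖deriv γ t‖ ≤ K := fun t => norm_deriv_le_of_lipschitz hL
  have hwi : ∀ x y, IntervalIntegrable (deriv γ) volume x y := fun x y =>
    bdd_intervalIntegrable hwm fun t _ => hwK t
  have hγc := hL.continuous
  refine energy_ge hab (fun t => hp0 _ _) (varInt_meas (varInt_continuous hG) hγc hφc hwm hψ s)
    (varInt_integrable hG hγc hφc hwm hψ hwK hC hab.le s) ?_
  have hsm : ∀ t, ‖deriv γ t + s • ψ t‖ ≤ K + |s| * C := fun t => by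
    refine (norm_add_le _ _).trans (add_le_add (hwK t) ?_)
    rw [norm_smul, Real.norm_eq_abs]
    exact mul_le_mul_of_nonneg_left (hC t) (abs_nonneg s)
  have h1 := rdist_le_ac hGc hs hp0 (w := fun t => deriv γ t + s • ψ t)
    (hwm.add (hψ.const_smul s)) hsm
    hab (η := fun t => γ t + s • ∫ s in a..t, ψ s) (fun t ht => by
      simp only [intervalIntegral.integral_same, smul_zero, add_zero]
      rw [intervalIntegral.integral_add (hwi _ _) (show IntervalIntegrable (fun t => s • ψ t) volume a t from
          (hψi _ _).smul s),
        intervalIntegral.integral_smul, ← add_assoc, ← lipschitz_ftc hL])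
    (hγc.add (hφc.const_smul s))
  simp only [hψ0, intervalIntegral.integral_same, smul_zero, add_zero] at h1
  rw [hγ] at h1
  exact h1

/-- First variation of the energy of a minimising segment, along the field `∫ ψ`. -/
lemma first_variation {n : ℕ} {G : En n → Bil n} (hG : ContDiff ℝ 1 G)
    (hs : ∀ x v w, G x v w = G x w v) (hp : ∀ x v, v ≠ 0 → 0 < G x v v)
    {γ : ℝ → En n} {K : NNReal} (hL : LipschitzWith K γ) {a b : ℝ} (hab : a < b)
    (hγ : ∀ s ∈ Icc a b, ∀ u ∈ Icc a b, rdist (asTensor G) (γ s) (γ u) = |s - u|)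
    {ψ : ℝ → En n} (hψ : AEStronglyMeasurable ψ volume) {C : ℝ} (hC : ∀ t, ‖ψ t‖ ≤ C)
    (hψ0 : ∫ t in a..b, ψ t = 0) :
    ∫ t in a..b, (fderiv ℝ G (γ t) (∫ s in a..t, ψ s) (deriv γ t) (deriv γ t)
      + 2 * G (γ t) (deriv γ t) (ψ t)) = 0 := by
  have hp0 : ∀ x v, 0 ≤ G x v v := fun x v => by
    rcases eq_or_ne v 0 with rfl | h
    · simp
    · exact (hp x v h).le
  have hψi : ∀ x y, IntervalIntegrable ψ volume x y := fun x y =>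
    bdd_intervalIntegrable hψ fun t _ => hC t
  have hφc : Continuous (fun t => ∫ s in a..t, ψ s) := intervalIntegral.continuous_primitive hψi a
  have hwm : AEStronglyMeasurable (deriv γ) volume :=
    (stronglyMeasurable_deriv γ).aestronglyMeasurable
  have hwK : ∀ t, ‖deriv γ t‖ ≤ K := fun t => norm_deriv_le_of_lipschitz hL
  have hγc := hL.continuous
  have hE0 : ∫ t in a..b, varInt G 0 (γ t) (∫ s in a..t, ψ s) (deriv γ t) (ψ t) ≤ b - a := by
    have h1 : ∫ t in a..b, varInt G 0 (γ t) (∫ s in a..t, ψ s) (deriv γ t) (ψ t)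
        ≤ ∫ t in a..b, (1:ℝ) := by
      refine intervalIntegral.integral_mono_ae_restrict hab.le
        (varInt_integrable hG hγc hφc hwm hψ hwK hC hab.le 0) intervalIntegrable_const ?_
      rw [EventuallyLE, ae_restrict_iff' measurableSet_Icc]
      filter_upwards [hL.ae_differentiableAt_real, Measure.ae_ne volume a, Measure.ae_ne volume b]
        with t ht hta htb hmem
      have := isom_speed_le hG.continuous hs hp hγ (t := t)
        ⟨lt_of_le_of_ne hmem.1 hta.symm, lt_of_le_of_ne hmem.2 htb⟩ ht.hasDerivAt
      simpa [varInt] using this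
    simpa using h1
  have hE := variation_energy_ge hG hs hp0 hL hab (by
    rw [hγ a ⟨le_rfl, hab.le⟩ b ⟨hab.le, le_rfl⟩, abs_sub_comm, abs_of_pos (sub_pos.2 hab)])
    hψ hC hψ0
  have hmin : IsLocalMin
      (fun s => ∫ t in a..b, varInt G s (γ t) (∫ s in a..t, ψ s) (deriv γ t) (ψ t)) 0 :=
    Eventually.of_forall fun s => hE0.trans (hE s)
  have hz := hmin.hasDerivAt_eq_zero (energy_hasDerivAt hG hγc hφc hwm hψ hwK hC hab.le)
  rw [← hz]
  congr 1
  ext t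
  simp only [varInt', zero_smul, add_zero, add_apply]
  rw [hs (γ t) (ψ t) (deriv γ t)]
  ring

/-! ### The du Bois-Reymond lemma -/

/-- The du Bois-Reymond lemma. -/
lemma dubois {F p : ℝ → ℝ} (hF : AEStronglyMeasurable F volume)
    (hp : AEStronglyMeasurable p volume) {a b C : ℝ} (hab : a < b)
    (hFC : ∀ t ∈ Icc a b, |F t| ≤ C) (hpC : ∀ t ∈ Icc a b, |p t| ≤ C)
    (h : ∀ χ : ℝ → ℝ, AEStronglyMeasurable χ volume → (∃ D, ∀ t, |χ t| ≤ D) →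
      ∫ t in a..b, χ t = 0 → ∫ t in a..b, (F t * (∫ s in a..t, χ s) + p t * χ t) = 0) :
    ∃ c, ∀ᵐ t, t ∈ Icc a b → p t = c + ∫ s in a..t, F s := by
  have hFi : IntervalIntegrable F volume a b :=
    bdd_intervalIntegrable hF fun t ht => hFC t (mem_Icc_of_uIoc hab.le ht)
  have hpi : IntervalIntegrable p volume a b :=
    bdd_intervalIntegrable hp fun t ht => hpC t (mem_Icc_of_uIoc hab.le ht)
  have hba : 0 < b - a := sub_pos.2 hab
  let Φ : ℝ → ℝ := fun t => ∫ s in a..t, F s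
  have hΦac : AbsolutelyContinuousOnInterval Φ a b :=
    hFi.absolutelyContinuousOnInterval_intervalIntegral left_mem_uIcc
  have hΦc : ContinuousOn Φ (Icc a b) := by
    have := hΦac.continuousOn
    rwa [uIcc_of_le hab.le] at this
  obtain ⟨B, hB⟩ := isCompact_Icc.exists_bound_of_continuousOn hΦc
  have hΦi : IntervalIntegrable Φ volume a b := hΦac.continuousOn.intervalIntegrable
  let c : ℝ := (b - a)⁻¹ * ∫ t in a..b, (p t - Φ t)
  let χ : ℝ → ℝ := (Icc a b).indicator fun t => p t - Φ t - c
  have hχeq : ∀ t ∈ Icc a b, χ t = p t - Φ t - c := fun t ht => indicator_of_mem ht _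
  have hχm : AEStronglyMeasurable χ volume := by
    rw [aestronglyMeasurable_indicator_iff measurableSet_Icc]
    exact (hp.restrict.sub (hΦc.aestronglyMeasurable measurableSet_Icc)).sub
      aestronglyMeasurable_const
  have hχb : ∀ t, |χ t| ≤ C + B + |c| := by
    intro t
    by_cases ht : t ∈ Icc a b
    · rw [hχeq t ht]
      have h1 := hpC t ht
      have h2 := hB t ht
      rw [Real.norm_eq_abs] at h2
      have h3 := abs_sub (p t - Φ t) c
      have h4 := abs_sub (p t) (Φ t)
      linarith
    · have h0 : χ t = 0 := indicator_of_notMem ht _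
      rw [h0, abs_zero]
      have h1 := (abs_nonneg _).trans (hpC a ⟨le_rfl, hab.le⟩)
      have h2 := (norm_nonneg _).trans (hB a ⟨le_rfl, hab.le⟩)
      positivity
  have hχi : IntervalIntegrable χ volume a b :=
    bdd_intervalIntegrable hχm fun t _ => hχb t
  have hχ0 : ∫ t in a..b, χ t = 0 := by
    rw [intervalIntegral.integral_congr (g := fun t => p t - Φ t - c) (fun t ht => by
      rw [uIcc_of_le hab.le] at ht; exact hχeq t ht)]
    rw [intervalIntegral.integral_sub (hpi.sub hΦi) intervalIntegrable_const,
      intervalIntegral.integral_const, smul_eq_mul, mul_inv_cancel_left₀ hba.ne', sub_self]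
  have hX := h χ hχm ⟨_, hχb⟩ hχ0
  have hφac : AbsolutelyContinuousOnInterval (fun t => ∫ s in a..t, χ s) a b :=
    hχi.absolutelyContinuousOnInterval_intervalIntegral left_mem_uIcc
  have hparts := hΦac.integral_mul_deriv_eq_deriv_mul hφac
  have e1 : ∫ t in a..b, Φ t * deriv (fun t => ∫ s in a..t, χ s) t = ∫ t in a..b, Φ t * χ t := by
    apply intervalIntegral.integral_congr_ae
    filter_upwards [hχi.ae_hasDerivAt_integral] with t ht hmem
    rw [(ht (uIoc_subset_uIcc hmem) a left_mem_uIcc).deriv]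
  have e2 : ∫ t in a..b, deriv Φ t * (∫ s in a..t, χ s) = ∫ t in a..b, F t * ∫ s in a..t, χ s := by
    apply intervalIntegral.integral_congr_ae
    filter_upwards [hFi.ae_hasDerivAt_integral] with t ht hmem
    rw [(ht (uIoc_subset_uIcc hmem) a left_mem_uIcc).deriv]
  rw [e1, e2, hχ0] at hparts
  simp only [mul_zero, intervalIntegral.integral_same, sub_zero, zero_sub] at hparts
  have hFφi : IntervalIntegrable (fun t => F t * ∫ s in a..t, χ s) volume a b :=
    hFi.mul_continuousOn hφac.continuousOn
  have hpχi : IntervalIntegrable (fun t => p t * χ t) volume a b :=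
    bdd_intervalIntegrable (C := C * (C + B + |c|)) (hp.mul hχm) fun t ht => by
      rw [Real.norm_eq_abs, abs_mul]
      have h1 := hpC t (mem_Icc_of_uIoc hab.le ht)
      exact mul_le_mul h1 (hχb t) (abs_nonneg _) ((abs_nonneg _).trans h1)
  have hΦχi : IntervalIntegrable (fun t => Φ t * χ t) volume a b :=
    hχi.continuousOn_mul hΦac.continuousOn
  rw [intervalIntegral.integral_add hFφi hpχi] at hX
  have hsq : ∫ t in a..b, χ t ^ 2 = 0 := by
    have e3 : ∫ t in a..b, χ t ^ 2 = ∫ t in a..b, (p t * χ t - Φ t * χ t - c * χ t) := by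
      apply intervalIntegral.integral_congr
      intro t ht
      rw [uIcc_of_le hab.le] at ht
      simp only [hχeq t ht]; ring
    rw [e3, intervalIntegral.integral_sub (hpχi.sub hΦχi) (hχi.const_mul c),
      intervalIntegral.integral_sub hpχi hΦχi, intervalIntegral.integral_const_mul, hχ0]
    linarith
  have hsqi : IntervalIntegrable (fun t => χ t ^ 2) volume a b := by
    simp only [sq]
    refine bdd_intervalIntegrable (C := (C + B + |c|) * (C + B + |c|)) (hχm.mul hχm) fun t ht => ?_
    rw [Real.norm_eq_abs, abs_mul]
    exact mul_le_mul (hχb t) (hχb t) (abs_nonneg _) ((abs_nonneg _).trans (hχb t))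
  rw [intervalIntegral.integral_eq_zero_iff_of_le_of_nonneg_ae hab.le
    (Eventually.of_forall fun t => sq_nonneg _) hsqi, EventuallyEq,
    ae_restrict_iff' measurableSet_Ioc] at hsq
  refine ⟨c, ?_⟩
  filter_upwards [hsq, Measure.ae_ne volume a] with t ht hta hmem
  have h1 := ht ⟨lt_of_le_of_ne hmem.1 hta.symm, hmem.2⟩
  have h2 : χ t = 0 := by simpa using h1
  rw [hχeq t hmem] at h2
  simp only [Φ] at h2
  linarith

/-! ### Weak Euler–Lagrange equation -/

/-- The covector `y ↦ ½ (D_y G)(v, v)` at `x`: the force term of the geodesic equation. -/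
def force {n : ℕ} (G : En n → Bil n) (x v : En n) : En n →L[ℝ] ℝ :=
  (1/2 : ℝ) • ((fderiv ℝ G x).flip v).flip v

lemma force_apply {n : ℕ} (G : En n → Bil n) (x v y : En n) :
    force G x v y = 1/2 * fderiv ℝ G x y v v := by
  simp [force]

lemma continuous_force {n : ℕ} {G : En n → Bil n} (hG : ContDiff ℝ 1 G) :
    Continuous (fun z : En n × En n => force G z.1 z.2) := by
  have hDc : Continuous (fderiv ℝ G) := hG.continuous_fderiv one_ne_zero
  rw [continuous_clm_apply]
  intro y
  simp only [force_apply]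
  fun_prop

lemma clm_ext_single {n : ℕ} {f g : En n →L[ℝ] ℝ}
    (h : ∀ i, f (EuclideanSpace.single i 1) = g (EuclideanSpace.single i 1)) : f = g := by
  apply ContinuousLinearMap.coe_injective
  apply (EuclideanSpace.basisFun (Fin n) ℝ).toBasis.ext
  intro i
  simpa using h i

/-- A positive definite form identifies `ℝⁿ` with its dual. -/
lemma bil_equiv {n : ℕ} (B : Bil n) (hB : ∀ v, v ≠ 0 → 0 < B v v) :
    ∃ e : En n ≃L[ℝ] (En n →L[ℝ] ℝ), (e : En n →L[ℝ] (En n →L[ℝ] ℝ)) = B := by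
  have hinj : Function.Injective (B : En n →ₗ[ℝ] (En n →L[ℝ] ℝ)) := by
    rw [injective_iff_map_eq_zero]
    intro v hv
    by_contra hne
    have h1 := hB v hne
    have h2 : B v = 0 := hv
    rw [h2] at h1
    simp at h1
  have hfr : Module.finrank ℝ (En n) = Module.finrank ℝ (En n →L[ℝ] ℝ) :=
    LinearEquiv.finrank_eq (InnerProductSpace.toDual ℝ (En n)).toLinearEquiv
  refine ⟨(LinearEquiv.ofInjectiveOfFinrankEq _ hinj hfr).toContinuousLinearEquiv, ?_⟩
  ext v w
  rfl

lemma bdd_comp_aux2 {n : ℕ} {F : Type*} [NormedAddCommGroup F] {Q : En n × En n → F}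
    (hQ : Continuous Q) {γ w : ℝ → En n} (hγ : Continuous γ) {K : ℝ}
    (hwK : ∀ t, ‖w t‖ ≤ K) (a b : ℝ) :
    ∃ B, ∀ t ∈ Icc a b, ‖Q (γ t, w t)‖ ≤ B := by
  obtain ⟨R1, hR1⟩ := (isCompact_Icc (a := a) (b := b)).exists_bound_of_continuousOn
    hγ.continuousOn
  obtain ⟨B, hB⟩ := (isCompact_closedBall (0 : En n × En n)
    (max R1 K)).exists_bound_of_continuousOn hQ.continuousOn
  refine ⟨B, fun t ht => hB _ ?_⟩
  rw [mem_closedBall_zero_iff, Prod.norm_def]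
  exact max_le_max (hR1 t ht) (hwK t)

lemma meas_pair {n : ℕ} {F : Type*} [TopologicalSpace F] {Q : En n × En n → F}
    (hQ : Continuous Q) {γ w : ℝ → En n} (hγ : Continuous γ) (hw : StronglyMeasurable w) :
    AEStronglyMeasurable (fun t => Q (γ t, w t)) volume :=
  hQ.comp_aestronglyMeasurable (hγ.aestronglyMeasurable.prodMk hw.aestronglyMeasurable)

lemma continuous_mom {n : ℕ} {G : En n → Bil n} (hG : Continuous G) :
    Continuous (fun z : En n × En n => G z.1 z.2) := by
  fun_prop

lemma momentum_meas1 {n : ℕ} {G : En n → Bil n} (hG : ContDiff ℝ 1 G)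
    {γ : ℝ → En n} (hγ : Continuous γ) :
    AEStronglyMeasurable (fun s => force G (γ s) (deriv γ s)) volume :=
  meas_pair (continuous_force hG) hγ (stronglyMeasurable_deriv γ)

lemma momentum_meas2 {n : ℕ} {G : En n → Bil n} (hG : Continuous G)
    {γ : ℝ → En n} (hγ : Continuous γ) :
    AEStronglyMeasurable (fun s => G (γ s) (deriv γ s)) volume :=
  meas_pair (continuous_mom hG) hγ (stronglyMeasurable_deriv γ)

lemma momentum_aux {n : ℕ} {G : En n → Bil n} (hG : ContDiff ℝ 1 G)
    {γ : ℝ → En n} {K : NNReal} (hL : LipschitzWith K γ) (a b : ℝ) :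
    ∃ C : ℝ, ∀ t ∈ Icc a b, ‖force G (γ t) (deriv γ t)‖ ≤ C ∧ ‖G (γ t) (deriv γ t)‖ ≤ C := by
  have hwK : ∀ t, ‖deriv γ t‖ ≤ K := fun t => norm_deriv_le_of_lipschitz hL
  obtain ⟨C1, hC1⟩ := bdd_comp_aux2 (continuous_force hG) hL.continuous hwK a b
  obtain ⟨C2, hC2⟩ := bdd_comp_aux2 (continuous_mom hG.continuous) hL.continuous hwK a b
  exact ⟨max C1 C2, fun t ht => ⟨(hC1 t ht).trans (le_max_left _ _),
      (hC2 t ht).trans (le_max_right _ _)⟩⟩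

/-- The first variation along `t ↦ (∫ χ) y`, in the form required by the du Bois-Reymond lemma. -/
lemma momentum_weak {n : ℕ} {G : En n → Bil n} (hG : ContDiff ℝ 1 G)
    (hs : ∀ x v w, G x v w = G x w v) (hp : ∀ x v, v ≠ 0 → 0 < G x v v)
    {γ : ℝ → En n} {K : NNReal} (hL : LipschitzWith K γ) {a b : ℝ} (hab : a < b)
    (hγ : ∀ s ∈ Icc a b, ∀ u ∈ Icc a b, rdist (asTensor G) (γ s) (γ u) = |s - u|)
    (y : En n) {χ : ℝ → ℝ} (hχm : AEStronglyMeasurable χ volume) {D : ℝ} (hD : ∀ t, |χ t| ≤ D)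
    (hχ0 : ∫ t in a..b, χ t = 0) :
    ∫ t in a..b, (force G (γ t) (deriv γ t) y * (∫ s in a..t, χ s)
          + G (γ t) (deriv γ t) y * χ t) = 0 := by
  have hV := first_variation hG hs hp hL hab hγ
        (ψ := fun t => χ t • y)
        (hχm.smul aestronglyMeasurable_const) (C := D * ‖y‖)
        (fun t => by
          rw [norm_smul]; exact mul_le_mul_of_nonneg_right (hD t) (norm_nonneg _))
        (by rw [intervalIntegral.integral_smul_const, hχ0, zero_smul])
  have : ∫ t in a..b, (force G (γ t) (deriv γ t) y * (∫ s in a..t, χ s)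
          + G (γ t) (deriv γ t) y * χ t) = 2⁻¹ * 0 := by
    rw [← hV, ← intervalIntegral.integral_const_mul]
    congr 1
    ext t
    rw [intervalIntegral.integral_smul_const, force_apply]
    simp only [map_smul, smul_apply, smul_eq_mul]
    ring
  simpa using this

lemma momentum_coord {n : ℕ} {G : En n → Bil n} (hG : ContDiff ℝ 1 G)
    (hs : ∀ x v w, G x v w = G x w v) (hp : ∀ x v, v ≠ 0 → 0 < G x v v)
    {γ : ℝ → En n} {K : NNReal} (hL : LipschitzWith K γ) {a b : ℝ} (hab : a < b)
    (hγ : ∀ s ∈ Icc a b, ∀ u ∈ Icc a b, rdist (asTensor G) (γ s) (γ u) = |s - u|) (y : En n) :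
    ∃ c : ℝ, ∀ᵐ t, t ∈ Icc a b →
      G (γ t) (deriv γ t) y = c + ∫ s in a..t, force G (γ s) (deriv γ s) y := by
  obtain ⟨C, hC⟩ := momentum_aux hG hL a b
  have hFm := momentum_meas1 hG hL.continuous
  have hpm := momentum_meas2 hG.continuous hL.continuous
  have hev : Continuous (fun f : En n →L[ℝ] ℝ => f y) := by fun_prop
  exact dubois (C := C * ‖y‖) (hev.comp_aestronglyMeasurable hFm)
      (hev.comp_aestronglyMeasurable hpm) hab
      (fun t ht => ((force G (γ t) (deriv γ t)).le_opNorm y).trans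
        (mul_le_mul_of_nonneg_right (hC t ht).1 (norm_nonneg _)))
      (fun t ht => ((G (γ t) (deriv γ t)).le_opNorm y).trans
        (mul_le_mul_of_nonneg_right (hC t ht).2 (norm_nonneg _)))
      (fun χ hχm ⟨D, hD⟩ hχ0 => momentum_weak hG hs hp hL hab hγ y hχm hD hχ0)

/-- Weak Euler–Lagrange equation: the momentum agrees a.e. with a primitive of the force. -/
lemma momentum_ae {n : ℕ} {G : En n → Bil n} (hG : ContDiff ℝ 1 G)
    (hs : ∀ x v w, G x v w = G x w v) (hp : ∀ x v, v ≠ 0 → 0 < G x v v)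
    {γ : ℝ → En n} {K : NNReal} (hL : LipschitzWith K γ) {a b : ℝ} (hab : a < b)
    (hγ : ∀ s ∈ Icc a b, ∀ u ∈ Icc a b, rdist (asTensor G) (γ s) (γ u) = |s - u|) :
    ∃ c : En n →L[ℝ] ℝ, ∀ᵐ t, t ∈ Icc a b →
      G (γ t) (deriv γ t) = c + ∫ s in a..t, force G (γ s) (deriv γ s) := by
  obtain ⟨C, hC⟩ := momentum_aux hG hL a b
  have hFm := momentum_meas1 hG hL.continuous
  choose c hc using fun i : Fin n =>
    momentum_coord hG hs hp hL hab hγ (EuclideanSpace.single i 1)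
  refine ⟨∑ i, c i • (EuclideanSpace.proj i : En n →L[ℝ] ℝ), ?_⟩
  filter_upwards [ae_all_iff.2 hc] with t ht hmem
  apply clm_ext_single
  intro i
  have hFi : IntervalIntegrable (fun s => force G (γ s) (deriv γ s)) volume a t :=
    bdd_intervalIntegrable hFm fun s hs => by
      rw [uIoc_of_le hmem.1] at hs
      exact (hC s ⟨hs.1.le, hs.2.trans hmem.2⟩).1
  rw [ht i hmem, add_apply, ContinuousLinearMap.intervalIntegral_apply hFi]
  congr 1
  simp

/-! ### Regularity of metric geodesics -/

/-- The velocity with momentum `m` at `x`, i.e. the Legendre transform. -/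
def legendre {n : ℕ} (G : En n → Bil n) (x : En n) (m : En n →L[ℝ] ℝ) : En n := (G x).inverse m

lemma legendre_spec {n : ℕ} {G : En n → Bil n} (hp : ∀ x v, v ≠ 0 → 0 < G x v v) (x : En n)
    (m : En n →L[ℝ] ℝ) : G x (legendre G x m) = m := by
  obtain ⟨e, he⟩ := bil_equiv (G x) (hp x)
  unfold legendre
  rw [← he]; simp

lemma legendre_unique {n : ℕ} {G : En n → Bil n} (hp : ∀ x v, v ≠ 0 → 0 < G x v v) {x v : En n}
    {m : En n →L[ℝ] ℝ} (h : G x v = m) : legendre G x m = v := by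
  obtain ⟨e, he⟩ := bil_equiv (G x) (hp x)
  unfold legendre
  rw [← h, ← he]; simp

lemma continuous_legendre {n : ℕ} {G : En n → Bil n} (hG : Continuous G)
    (hp : ∀ x v, v ≠ 0 → 0 < G x v v) {γ : ℝ → En n} (hγ : Continuous γ)
    {m : ℝ → En n →L[ℝ] ℝ} (hm : Continuous m) : Continuous fun t => legendre G (γ t) (m t) := by
  have hinv : Continuous fun x => (G x).inverse := by
    rw [continuous_iff_continuousAt]
    intro x
    obtain ⟨e, he⟩ := bil_equiv (G x) (hp x)
    have h1 := (contDiffAt_map_inverse (𝕜 := ℝ) (n := 0) e).continuousAt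
    rw [he] at h1
    exact ContinuousAt.comp (f := G) h1 hG.continuousAt
  unfold legendre
  exact (hinv.comp hγ).clm_apply hm

/-- A minimising segment has, after a.e. modification, a continuous velocity `v`. -/
lemma lip_velocity {n : ℕ} {G : En n → Bil n} (hG : ContDiff ℝ 1 G)
    (hs : ∀ x v w, G x v w = G x w v) (hp : ∀ x v, v ≠ 0 → 0 < G x v v)
    {γ : ℝ → En n} {K : NNReal} (hL : LipschitzWith K γ) {a b : ℝ} (hab : a < b)
    (hγ : ∀ s ∈ Icc a b, ∀ u ∈ Icc a b, rdist (asTensor G) (γ s) (γ u) = |s - u|) :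
    ∃ v : ℝ → En n, ContinuousOn v (Icc a b) ∧ (∀ᵐ t, t ∈ Icc a b → deriv γ t = v t) ∧
      ∃ c : En n →L[ℝ] ℝ, ∀ t ∈ Icc a b,
        G (γ t) (v t) = c + ∫ s in a..t, force G (γ s) (deriv γ s) := by
  obtain ⟨c, hc⟩ := momentum_ae hG hs hp hL hab hγ
  obtain ⟨C, hC⟩ := momentum_aux hG hL a b
  have hFm := momentum_meas1 hG hL.continuous
  have hFi : IntegrableOn (fun s => force G (γ s) (deriv γ s)) (Icc a b) volume := by
    refine Measure.integrableOn_of_bounded (M := C) (by simp) hFm ?_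
    rw [ae_restrict_iff' measurableSet_Icc]
    exact Eventually.of_forall fun t ht => (hC t ht).1
  have hΦ : ContinuousOn (fun t => ∫ s in a..t, force G (γ s) (deriv γ s)) (Icc a b) := by
    have := intervalIntegral.continuousOn_primitive_interval (μ := volume) (a := a) (b := b)
      (f := fun s => force G (γ s) (deriv γ s)) (by rwa [uIcc_of_le hab.le])
    rwa [uIcc_of_le hab.le] at this
  have hm : ContinuousOn (fun t => c + ∫ s in a..t, force G (γ s) (deriv γ s)) (Icc a b) :=
    continuousOn_const.add hΦ
  refine ⟨fun t => legendre G (γ t) (c + ∫ s in a..t, force G (γ s) (deriv γ s)), ?_, ?_, c, ?_⟩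
  · have h1 := continuous_legendre hG.continuous hp hL.continuous
      (m := IccExtend hab.le ((Icc a b).domRestrict
        (fun t => c + ∫ s in a..t, force G (γ s) (deriv γ s))))
      ((continuousOn_iff_continuous_domRestrict.1 hm).Icc_extend')
    refine h1.continuousOn.congr fun t ht => ?_
    simp only [IccExtend_of_mem hab.le _ ht, domRestrict_apply]
  · filter_upwards [hc] with t ht hmem
    exact (legendre_unique hp (ht hmem)).symm
  · exact fun t _ => legendre_spec hp _ _

lemma continuousOn_pair {n : ℕ} {F : Type*} [TopologicalSpace F] {Q : En n × En n → F}
    (hQ : Continuous Q) {γ w : ℝ → En n} (hγ : Continuous γ) {S : Set ℝ} (hw : ContinuousOn w S) :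
    ContinuousOn (fun t => Q (γ t, w t)) S :=
  hQ.comp_continuousOn (hγ.continuousOn.prodMk hw)

/-- A minimising segment is differentiable with continuous velocity, and its momentum satisfies the
Euler–Lagrange equation. -/
lemma lip_regular {n : ℕ} {G : En n → Bil n} (hG : ContDiff ℝ 1 G)
    (hs : ∀ x v w, G x v w = G x w v) (hp : ∀ x v, v ≠ 0 → 0 < G x v v)
    {γ : ℝ → En n} {K : NNReal} (hL : LipschitzWith K γ) {a b : ℝ} (hab : a < b)
    (hγ : ∀ s ∈ Icc a b, ∀ u ∈ Icc a b, rdist (asTensor G) (γ s) (γ u) = |s - u|) :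
    ∃ v : ℝ → En n, ContinuousOn v (Icc a b) ∧ ∀ t ∈ Ioo a b, HasDerivAt γ (v t) t ∧
      HasDerivAt (fun t => G (γ t) (v t)) (force G (γ t) (v t)) t := by
  obtain ⟨v, hv, hae, c, hc⟩ := lip_velocity hG hs hp hL hab hγ
  refine ⟨v, hv, fun t ht => ?_⟩
  have hnh : Icc a b ∈ 𝓝 t := Icc_mem_nhds ht.1 ht.2
  have prim : ∀ {F : Type} [NormedAddCommGroup F] [NormedSpace ℝ F] [CompleteSpace F] {f : ℝ → F},
      ContinuousOn f (Icc a b) → HasDerivAt (fun t => ∫ s in a..t, f s) (f t) t := by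
    intro F _ _ _ f hf
    refine intervalIntegral.integral_hasDerivAt_right ?_ ?_ (hf.continuousAt hnh)
    · exact (hf.mono (by rw [uIcc_of_le ht.1.le]; exact Icc_subset_Icc_right ht.2.le)).intervalIntegrable
    · exact (hf.mono Ioo_subset_Icc_self).stronglyMeasurableAtFilter isOpen_Ioo t ht
  have congrae : ∀ {F : Type} [NormedAddCommGroup F] [NormedSpace ℝ F] (h : En n × En n → F),
      ∀ t ∈ Icc a b, ∫ s in a..t, h (γ s, deriv γ s) = ∫ s in a..t, h (γ s, v s) := by
    intro F _ _ h t ht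
    apply intervalIntegral.integral_congr_ae
    filter_upwards [hae] with s hs hmem
    rw [uIoc_of_le ht.1] at hmem
    rw [hs ⟨hmem.1.le, hmem.2.trans ht.2⟩]
  constructor
  · have h1 := (prim hv).const_add (γ a)
    refine h1.congr_of_eventuallyEq ?_
    filter_upwards [hnh] with s hs
    rw [lipschitz_ftc hL a s, congrae (fun z => z.2) s hs]
  · have hFc : ContinuousOn (fun t => force G (γ t) (v t)) (Icc a b) :=
      continuousOn_pair (continuous_force hG) hL.continuous hv
    have h1 := (prim hFc).const_add c
    refine h1.congr_of_eventuallyEq ?_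
    filter_upwards [hnh] with s hs
    rw [hc s hs, congrae (fun z => force G z.1 z.2) s hs]

/-- A minimising segment has unit speed: speed below one somewhere would make it shorter than the
distance between its endpoints. -/
lemma lip_speed {n : ℕ} {G : En n → Bil n} (hG : ContDiff ℝ 1 G)
    (hs : ∀ x v w, G x v w = G x w v) (hp : ∀ x v, v ≠ 0 → 0 < G x v v)
    {γ : ℝ → En n} {K : NNReal} (hL : LipschitzWith K γ) {a b : ℝ}
    (hγ : ∀ s ∈ Icc a b, ∀ u ∈ Icc a b, rdist (asTensor G) (γ s) (γ u) = |s - u|)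
    {v : ℝ → En n} (hv : ContinuousOn v (Icc a b)) (hd : ∀ t ∈ Ioo a b, HasDerivAt γ (v t) t)
    {t : ℝ} (ht : t ∈ Ioo a b) : G (γ t) (v t) (v t) = 1 := by
  have hGc : Continuous G := hG.continuous
  have hp0 : ∀ x v, 0 ≤ G x v v := fun x v => by
    rcases eq_or_ne v 0 with rfl | h
    · simp
    · exact (hp x v h).le
  have hle : ∀ t ∈ Ioo a b, G (γ t) (v t) (v t) ≤ 1 := fun t ht =>
    isom_speed_le hGc hs hp hγ ht (hd t ht)
  refine le_antisymm (hle t ht) ?_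
  by_contra hlt
  push Not at hlt
  obtain ⟨u, hu1, hu2⟩ := exists_between ht.2
  have hsub : ∀ s ∈ Icc t u, s ∈ Ioo a b := fun s hs =>
    ⟨ht.1.trans_le hs.1, hs.2.trans_lt hu2⟩
  have h1 := rdist_le_ac hGc hs hp0 (w := deriv γ)
    (stronglyMeasurable_deriv γ).aestronglyMeasurable
    (fun t => norm_deriv_le_of_lipschitz hL) hu1 (η := γ)
    (fun s _ => lipschitz_ftc hL t s) hL.continuous
  rw [hγ t ⟨ht.1.le, ht.2.le⟩ u ⟨(ht.1.trans hu1).le, hu2.le⟩, abs_sub_comm,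
    abs_of_pos (sub_pos.2 hu1)] at h1
  have h2 : ∫ s in t..u, √(G (γ s) (deriv γ s) (deriv γ s)) =
      ∫ s in t..u, √(G (γ s) (v s) (v s)) := by
    apply intervalIntegral.integral_congr
    intro s hs
    rw [uIcc_of_le hu1.le] at hs
    simp only [(hd s (hsub s hs)).deriv]
  have hcont : ContinuousOn (fun s => √(G (γ s) (v s) (v s))) (Icc t u) := by
    have hv' : ContinuousOn v (Icc t u) := hv.mono fun s hs => Ioo_subset_Icc_self (hsub s hs)
    have hg' : ContinuousOn (fun s => G (γ s)) (Icc t u) :=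
      (hGc.comp hL.continuous).continuousOn
    exact Real.continuous_sqrt.comp_continuousOn ((hg'.clm_apply hv').clm_apply hv')
  have h3 : ∫ s in t..u, √(G (γ s) (v s) (v s)) < ∫ s in t..u, (1:ℝ) := by
    refine intervalIntegral.integral_lt_integral_of_continuousOn_of_le_of_exists_lt hu1 hcont
      continuousOn_const (fun s hs => ?_) ⟨t, ⟨le_rfl, hu1.le⟩, ?_⟩
    · exact Real.sqrt_le_iff.2 ⟨zero_le_one, by simpa using hle s (hsub s ⟨hs.1.le, hs.2⟩)⟩
    · rw [Real.sqrt_lt' one_pos]; linarith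
  simp only [intervalIntegral.integral_const, smul_eq_mul, mul_one] at h3
  linarith

/-- Regularity on an interval where the curve realises distances; the curve is extended from this
interval to a Lipschitz curve on the line. -/
lemma geod_regular_local {n : ℕ} {G : En n → Bil n} (hG : ContDiff ℝ 1 G)
    (hs : ∀ x v w, G x v w = G x w v) (hp : ∀ x v, v ≠ 0 → 0 < G x v v)
    {γ : ℝ → En n} {a b : ℝ} (hab : a < b)
    (hγ : ∀ s ∈ Icc a b, ∀ u ∈ Icc a b, rdist (asTensor G) (γ s) (γ u) = |s - u|) :
    ∃ v : ℝ → En n, ∀ t ∈ Ioo a b, HasDerivAt γ (v t) t ∧ G (γ t) (v t) (v t) = 1 ∧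
      HasDerivAt (fun t => G (γ t) (v t)) (force G (γ t) (v t)) t := by
  obtain ⟨K, hK⟩ := isom_lipschitz hG.continuous hp hγ
  have hL : LipschitzWith K (IccExtend hab.le ((Icc a b).domRestrict γ)) := by
    have := (lipschitzOnWith_iff_restrict.1 hK).comp (LipschitzWith.projIcc hab.le)
    rw [mul_one] at this
    exact this
  have heq : ∀ t ∈ Icc a b, IccExtend hab.le ((Icc a b).domRestrict γ) t = γ t := fun t ht => by
    simp [IccExtend_of_mem hab.le _ ht]
  have hγ' : ∀ s ∈ Icc a b, ∀ u ∈ Icc a b,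
      rdist (asTensor G) (IccExtend hab.le ((Icc a b).domRestrict γ) s)
        (IccExtend hab.le ((Icc a b).domRestrict γ) u) = |s - u| := by
    intro s hs u hu
    rw [heq s hs, heq u hu, hγ s hs u hu]
  obtain ⟨v, hv, hd⟩ := lip_regular hG hs hp hL hab hγ'
  refine ⟨v, fun t ht => ?_⟩
  have h1 := lip_speed hG hs hp hL hγ' hv (fun t ht => (hd t ht).1) ht
  have hev : γ =ᶠ[𝓝 t] IccExtend hab.le ((Icc a b).domRestrict γ) := by
    filter_upwards [Icc_mem_nhds ht.1 ht.2] with s hs using (heq s hs).symm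
  have hte := heq t ⟨ht.1.le, ht.2.le⟩
  have h2 := hd t ht
  rw [hte] at h1 h2
  refine ⟨h2.1.congr_of_eventuallyEq hev, h1, h2.2.congr_of_eventuallyEq ?_⟩
  filter_upwards [hev] with s hs
  rw [hs]

/-- Regularity of unit-speed metric geodesics: they are differentiable inside their interval of
definition, have unit speed, and satisfy the Euler–Lagrange equation of the energy. -/
lemma geod_regular {n : ℕ} {G : En n → Bil n} (hG : ContDiff ℝ 1 G)
    (hs : ∀ x v w, G x v w = G x w v) (hp : ∀ x v, v ≠ 0 → 0 < G x v v)
    {γ : ℝ → En n} {T : ℝ} (hγ : IsGeodesicOn (rdist (asTensor G)) γ 1 (Icc 0 T))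
    {t : ℝ} (ht : t ∈ Ioo 0 T) : HasDerivAt γ (deriv γ t) t ∧
      G (γ t) (deriv γ t) (deriv γ t) = 1 ∧
      HasDerivAt (fun t => G (γ t) (deriv γ t)) (force G (γ t) (deriv γ t)) t := by
  obtain ⟨δ, hδ, h⟩ := hγ t ⟨ht.1.le, ht.2.le⟩
  have hδ' : 0 < min (δ / 2) (min t (T - t)) :=
    lt_min (half_pos hδ) (lt_min ht.1 (sub_pos.2 ht.2))
  set η := min (δ / 2) (min t (T - t)) with hη
  have h1 : η ≤ δ / 2 := min_le_left _ _
  have h2 : η ≤ t := (min_le_right _ _).trans (min_le_left _ _)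
  have h3 : η ≤ T - t := (min_le_right _ _).trans (min_le_right _ _)
  have hI : ∀ s ∈ Icc (t - η) (t + η), s ∈ Icc 0 T ∧ |s - t| < δ := fun s hs =>
    ⟨⟨by linarith [hs.1], by linarith [hs.2]⟩, by
      rw [abs_lt]; constructor <;> linarith [hs.1, hs.2]⟩
  obtain ⟨v, hv⟩ := geod_regular_local hG hs hp (γ := γ) (a := t - η) (b := t + η) (by linarith)
    (fun s hs u hu => by
      rw [h s (hI s hs).1 u (hI u hu).1 (hI s hs).2 (hI u hu).2, one_mul])
  have hmem : t ∈ Ioo (t - η) (t + η) := ⟨by linarith, by linarith⟩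
  obtain ⟨h4, h5, h6⟩ := hv t hmem
  have h7 : deriv γ t = v t := h4.deriv
  rw [h7]
  refine ⟨h4, h5, h6.congr_of_eventuallyEq ?_⟩
  filter_upwards [Ioo_mem_nhds hmem.1 hmem.2] with s hs
  rw [(hv s hs).1.deriv]

lemma geod_continuousOn {n : ℕ} {G : En n → Bil n} (hG : ContDiff ℝ 1 G)
    (hp : ∀ x v, v ≠ 0 → 0 < G x v v)
    {γ : ℝ → En n} {T : ℝ} (hγ : IsGeodesicOn (rdist (asTensor G)) γ 1 (Icc 0 T)) :
    ContinuousOn γ (Icc 0 T) := by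
  intro t ht
  obtain ⟨δ, hδ, h⟩ := hγ t ht
  have hI : ∀ s ∈ Icc (max 0 (t - δ / 2)) (min T (t + δ / 2)), s ∈ Icc 0 T ∧ |s - t| < δ :=
    fun s hs => by
      have h1 := max_le_iff.1 hs.1
      have h2 := le_min_iff.1 hs.2
      exact ⟨⟨h1.1, h2.1⟩, by rw [abs_lt]; constructor <;> linarith [h1.2, h2.2]⟩
  obtain ⟨K, hK⟩ := isom_lipschitz hG.continuous hp (γ := γ) (a := max 0 (t - δ / 2))
    (b := min T (t + δ / 2)) (fun s hs u hu => by
      rw [h s (hI s hs).1 u (hI u hu).1 (hI s hs).2 (hI u hu).2, one_mul])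
  have hmem : t ∈ Icc (max 0 (t - δ / 2)) (min T (t + δ / 2)) :=
    ⟨max_le ht.1 (by linarith), le_min ht.2 (by linarith)⟩
  refine (hK.continuousOn t hmem).mono_of_mem_nhdsWithin ?_
  have : Icc (max 0 (t - δ / 2)) (min T (t + δ / 2)) = Icc 0 T ∩ Icc (t - δ / 2) (t + δ / 2) := by
    rw [Icc_inter_Icc]
  rw [this]
  exact inter_mem self_mem_nhdsWithin
    (mem_nhdsWithin_of_mem_nhds (Icc_mem_nhds (by linarith) (by linarith)))

/-! ### Decay estimates for the metric -/

/-- The metric tensor `g` as a field of continuous bilinear forms, rebuilt from its Cartesian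
components. -/
def toBil {n : ℕ} (g : MetricTensor n) (x : En n) : Bil n :=
  ∑ i, ∑ j, g x (EuclideanSpace.single i 1) (EuclideanSpace.single j 1) •
    (EuclideanSpace.proj i : En n →L[ℝ] ℝ).smulRight (EuclideanSpace.proj j : En n →L[ℝ] ℝ)

lemma toBil_apply {n : ℕ} (g : MetricTensor n) (x v w : En n) : toBil g x v w =
    ∑ i, ∑ j, v i * w j * g x (EuclideanSpace.single i 1) (EuclideanSpace.single j 1) := by
  simp only [toBil, sum_apply, smul_apply, ContinuousLinearMap.smulRight_apply,
    smul_eq_mul]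
  refine Finset.sum_congr rfl fun i _ => Finset.sum_congr rfl fun j _ => ?_
  change g x _ _ * (v i * w j) = _
  ring

lemma contDiff_toBil {n : ℕ} {g : MetricTensor n} {α μ : ℝ} (hg : IsAsympConical n g α μ) :
    ContDiff ℝ 1 (toBil g) := by
  unfold toBil
  refine ContDiff.sum fun i _ => ContDiff.sum fun j _ => ContDiff.fun_smul ?_ contDiff_const
  exact (hg.reg i j).of_le (by norm_num)

/-- A symmetric bilinear form is determined by its components. -/
lemma bilin_expand {n : ℕ} {b : En n → En n → ℝ} (hs : ∀ v w, b v w = b w v)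
    (ha : ∀ v w u, b (v + w) u = b v u + b w u) (hm : ∀ (c : ℝ) v u, b (c • v) u = c * b v u)
    (v w : En n) : b v w =
      ∑ i, ∑ j, v i * w j * b (EuclideanSpace.single i 1) (EuclideanSpace.single j 1) := by
  have h0 : ∀ u, b 0 u = 0 := fun u => by simpa using hm 0 0 u
  have hsum : ∀ (s : Finset (Fin n)) (c : Fin n → ℝ) u,
      b (∑ i ∈ s, c i • (EuclideanSpace.single i 1 : En n)) u
        = ∑ i ∈ s, c i * b (EuclideanSpace.single i 1) u := by
    intro s c u
    induction s using Finset.induction_on with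
    | empty => simp [h0]
    | insert i s hi ih => rw [Finset.sum_insert hi, Finset.sum_insert hi, ha, hm, ih]
  have hx : ∀ v : En n, v = ∑ i, v i • (EuclideanSpace.single i 1 : En n) := fun v => by
    have := (EuclideanSpace.basisFun (Fin n) ℝ).sum_repr v
    simpa using this.symm
  conv_lhs => rw [hx v, hsum]
  refine Finset.sum_congr rfl fun i _ => ?_
  rw [hs]
  conv_lhs => rw [hx w, hsum]
  rw [Finset.mul_sum]
  refine Finset.sum_congr rfl fun j _ => ?_
  rw [hs]; ring

lemma asTensor_toBil {n : ℕ} {g : MetricTensor n} {α μ : ℝ} (hg : IsAsympConical n g α μ) :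
    asTensor (toBil g) = g := by
  funext x v w
  rw [asTensor, toBil_apply,
    ← bilin_expand (hg.symm x) (hg.add_left x) (hg.smul_left x) v w]

lemma cone_expand {n : ℕ} (α : ℝ) (x v w : En n) : coneMetric n α x v w =
    ∑ i, ∑ j, v i * w j *
      coneMetric n α x (EuclideanSpace.single i 1) (EuclideanSpace.single j 1) := by
  refine bilin_expand (fun v w => ?_) (fun v w u => ?_) (fun c v u => ?_) v w
  · simp only [coneMetric, real_inner_comm v w]; ring
  · simp only [coneMetric, inner_add_left]; ring
  · simp only [coneMetric, real_inner_smul_left]; ring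

/-- The derivative of the cone metric at `x` in the direction `y`, evaluated on `(v, v)`. -/
def coneDer {n : ℕ} (α : ℝ) (x y v : En n) : ℝ :=
  2 * (1 - sin α ^ 2) * (⟪v, x⟫ * ⟪v, y⟫ / ‖x‖ ^ 2 - ⟪v, x⟫ ^ 2 * ⟪x, y⟫ / ‖x‖ ^ 4)

lemma cone_line_deriv {n : ℕ} (α : ℝ) {x : En n} (hx : x ≠ 0) (y v : En n) :
    HasDerivAt (fun s : ℝ => coneMetric n α (x + s • y) v v) (coneDer α x y v) 0 := by
  have h1 : HasDerivAt (fun s : ℝ => x + s • y) y 0 := by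
    simpa using ((hasDerivAt_id (0:ℝ)).smul_const y).const_add x
  have h2 : HasDerivAt (fun s : ℝ => ⟪v, x + s • y⟫) ⟪v, y⟫ 0 := by
    simpa using (hasDerivAt_const (0:ℝ) v).inner ℝ h1
  have h3 : HasDerivAt (fun s : ℝ => ‖x + s • y‖ ^ 2) (2 * ⟪x, y⟫) 0 := by
    simpa using h1.norm_sq
  have hn : ‖x‖ ≠ 0 := norm_ne_zero_iff.2 hx
  have h4 := ((((h2.mul h2).div h3 (by simpa using hx)).const_mul (1 - sin α ^ 2)).add_const
    (sin α ^ 2 * ⟪v, v⟫))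
  refine h4.congr_deriv ?_
  simp only [zero_smul, add_zero, coneDer, Pi.mul_apply]
  field_simp
  ring

lemma cone_differentiableAt {n : ℕ} (α : ℝ) {x : En n} (hx : x ≠ 0) (v w : En n) :
    DifferentiableAt ℝ (fun y => coneMetric n α y v w) x := by
  unfold coneMetric
  have h : ‖x‖ ^ 2 ≠ 0 := pow_ne_zero 2 (norm_ne_zero_iff.2 hx)
  have h3 : DifferentiableAt ℝ (fun y : En n => ‖y‖ ^ 2) x := differentiableAt_id.norm_sq ℝ
  have h1 : DifferentiableAt ℝ (fun y : En n => ⟪v, y⟫ * ⟪w, y⟫) x :=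
    ((differentiableAt_const v).inner ℝ differentiableAt_id).fun_mul
      ((differentiableAt_const w).inner ℝ differentiableAt_id)
  have h4 : DifferentiableAt ℝ (fun y : En n => (‖y‖ ^ 2)⁻¹) x :=
    DifferentiableAt.comp (g := fun s : ℝ => s⁻¹) x (differentiableAt_inv h) h3
  simp only [div_eq_mul_inv]
  exact ((h1.fun_mul h4).const_mul _).add_const _

lemma abs_coord_le {n : ℕ} (v : En n) (i : Fin n) : |v i| ≤ ‖v‖ := by
  simpa using PiLp.norm_apply_le v i

lemma bil_sum_bound {n : ℕ} (v w : En n) (a : Fin n → Fin n → ℝ) {c : Fin n → Fin n → ℝ} {D : ℝ}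
    (h : ∀ i j, |a i j| ≤ c i j * D) :
    |∑ i, ∑ j, v i * w j * a i j| ≤ (∑ i, ∑ j, c i j) * D * ‖v‖ * ‖w‖ := by
  refine (Finset.abs_sum_le_sum_abs _ _).trans ?_
  simp only [Finset.sum_mul]
  refine Finset.sum_le_sum fun i _ => (Finset.abs_sum_le_sum_abs _ _).trans
    (Finset.sum_le_sum fun j _ => ?_)
  rw [abs_mul, abs_mul]
  have h1 := abs_coord_le v i
  have h2 := abs_coord_le w j
  have h3 := h i j
  calc |v i| * |w j| * |a i j| ≤ ‖v‖ * ‖w‖ * (c i j * D) := by gcongr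
    _ = _ := by ring

/-- The decay of `g - g_cone` and of its first derivatives, in invariant form. The exponent may be
lowered to some `ν ≤ 1/2`. -/
lemma decay_estimates {n : ℕ} {g : MetricTensor n} {α μ : ℝ} (hμ : 0 < μ)
    (hg : IsAsympConical n g α μ) : ∃ C R ν : ℝ, 0 ≤ C ∧ 1 ≤ R ∧ 0 < ν ∧ ν ≤ 1/2 ∧
      ∀ x : En n, R ≤ ‖x‖ →
        (∀ v w, |toBil g x v w - coneMetric n α x v w| ≤ C * ‖x‖ ^ (-ν) * ‖v‖ * ‖w‖) ∧
        (∀ y v, |fderiv ℝ (toBil g) x y v v - coneDer α x y v| ≤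
          C * (‖x‖ ^ (-ν) * ‖x‖⁻¹ * ‖y‖) * ‖v‖ * ‖v‖) := by
  choose c r hc hcr using hg.decay
  refine ⟨∑ i, ∑ j, c i j, 1 + ∑ i, ∑ j, |r i j|, min μ (1/2),
    Finset.sum_nonneg fun i _ => Finset.sum_nonneg fun j _ => (hc i j).le, ?_,
    lt_min hμ (by norm_num), min_le_right _ _, fun x hx => ?_⟩
  · have : 0 ≤ ∑ i, ∑ j, |r i j| :=
      Finset.sum_nonneg fun i _ => Finset.sum_nonneg fun j _ => abs_nonneg _
    linarith
  have hr0 : 0 ≤ ∑ i, ∑ j, |r i j| :=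
      Finset.sum_nonneg fun i _ => Finset.sum_nonneg fun j _ => abs_nonneg _
  have hx1 : 1 ≤ ‖x‖ := by linarith
  have hx0 : 0 < ‖x‖ := by linarith
  have hxne : x ≠ 0 := norm_pos_iff.1 hx0
  have hr : ∀ i j, r i j ≤ ‖x‖ := fun i j => by
    have h1 : |r i j| ≤ ∑ j, |r i j| :=
      Finset.single_le_sum (f := fun j => |r i j|) (fun _ _ => abs_nonneg _) (Finset.mem_univ j)
    have h2 : ∑ j, |r i j| ≤ ∑ i, ∑ j, |r i j| :=
      Finset.single_le_sum (f := fun i => ∑ j, |r i j|)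
        (fun _ _ => Finset.sum_nonneg fun _ _ => abs_nonneg _) (Finset.mem_univ i)
    linarith [le_abs_self (r i j)]
  have hexp : ‖x‖ ^ (-μ) ≤ ‖x‖ ^ (-(min μ (1/2))) :=
    Real.rpow_le_rpow_of_exponent_le hx1 (neg_le_neg (min_le_left _ _))
  constructor
  · intro v w
    rw [toBil_apply, cone_expand, ← Finset.sum_sub_distrib]
    simp only [← Finset.sum_sub_distrib, ← mul_sub]
    refine bil_sum_bound v w _ fun i j => ?_
    have h := hcr i j x (hr i j) 0 (by norm_num)
    rw [norm_iteratedFDeriv_zero, Nat.cast_zero, sub_zero, Real.norm_eq_abs] at h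
    exact h.trans (mul_le_mul_of_nonneg_left hexp (hc i j).le)
  · intro y v
    have hline : HasDerivAt (fun s : ℝ => x + s • y) y 0 := by
      simpa using ((hasDerivAt_id (0:ℝ)).smul_const y).const_add x
    have hA : ∀ i j : Fin n, DifferentiableAt ℝ (fun y =>
        g y (EuclideanSpace.single i 1) (EuclideanSpace.single j 1) -
        coneMetric n α y (EuclideanSpace.single i 1) (EuclideanSpace.single j 1)) x := fun i j =>
      (((hg.reg i j).differentiable (by norm_num)) x).sub (cone_differentiableAt α hxne _ _)
    have h1 : HasDerivAt (fun s : ℝ => toBil g (x + s • y) v v)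
        (fderiv ℝ (toBil g) x y v v) 0 := by
      have h := ((contDiff_toBil hg).differentiable one_ne_zero x).hasFDerivAt
      have h' : HasDerivAt (fun s : ℝ => toBil g (x + s • y)) (fderiv ℝ (toBil g) x y) 0 := by
        refine HasFDerivAt.comp_hasDerivAt (l := toBil g) 0 ?_ hline
        simpa using h
      have := (h'.clm_apply (hasDerivAt_const (0:ℝ) v)).clm_apply (hasDerivAt_const (0:ℝ) v)
      simpa using this
    have h3 : HasDerivAt (fun s : ℝ => toBil g (x + s • y) v v - coneMetric n α (x + s • y) v v)
        (∑ i, ∑ j, v i * v j * fderiv ℝ (fun y =>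
        g y (EuclideanSpace.single i 1) (EuclideanSpace.single j 1) -
        coneMetric n α y (EuclideanSpace.single i 1) (EuclideanSpace.single j 1)) x y) 0 := by
      have e : (fun s : ℝ => toBil g (x + s • y) v v - coneMetric n α (x + s • y) v v) =
          fun s => ∑ i, ∑ j, v i * v j * (fun y =>
        g y (EuclideanSpace.single i 1) (EuclideanSpace.single j 1) -
        coneMetric n α y (EuclideanSpace.single i 1) (EuclideanSpace.single j 1)) (x + s • y) := by
        funext s
        rw [toBil_apply, cone_expand, ← Finset.sum_sub_distrib]
        simp only [← Finset.sum_sub_distrib, ← mul_sub]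
      rw [e]
      refine HasDerivAt.fun_sum fun i _ => HasDerivAt.fun_sum fun j _ => HasDerivAt.const_mul _ ?_
      refine HasFDerivAt.comp_hasDerivAt (l := fun y =>
        g y (EuclideanSpace.single i 1) (EuclideanSpace.single j 1) -
        coneMetric n α y (EuclideanSpace.single i 1) (EuclideanSpace.single j 1)) 0 ?_ hline
      have := (hA i j).hasFDerivAt
      simpa using this
    rw [(h1.fun_sub (cone_line_deriv α hxne y v)).unique h3]
    refine bil_sum_bound v v _ fun i j => ?_
    have h := hcr i j x (hr i j) 1 (by norm_num)
    rw [norm_iteratedFDeriv_one, Nat.cast_one, Real.rpow_sub hx0, Real.rpow_one,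
      div_eq_mul_inv] at h
    refine ((fderiv ℝ (fun y =>
        g y (EuclideanSpace.single i 1) (EuclideanSpace.single j 1) -
        coneMetric n α y (EuclideanSpace.single i 1) (EuclideanSpace.single j 1)) x).le_opNorm
        y).trans ?_
    rw [← mul_assoc]
    refine mul_le_mul_of_nonneg_right (h.trans ?_) (norm_nonneg _)
    refine mul_le_mul_of_nonneg_left ?_ (hc i j).le
    exact mul_le_mul_of_nonneg_right hexp (by positivity)

/-! ### Pointwise estimates for the momenta -/

/-- The generator of rotations in the `(i, j)` coordinate plane. -/
def rotGen {n : ℕ} (i j : Fin n) : En n →L[ℝ] En n :=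
  (EuclideanSpace.proj i : En n →L[ℝ] ℝ).smulRight (EuclideanSpace.single j 1) -
    (EuclideanSpace.proj j : En n →L[ℝ] ℝ).smulRight (EuclideanSpace.single i 1)

lemma rotGen_apply {n : ℕ} (i j : Fin n) (x : En n) : rotGen i j x =
    x i • (EuclideanSpace.single j 1 : En n) - x j • (EuclideanSpace.single i 1 : En n) := rfl

lemma inner_rotGen {n : ℕ} (i j : Fin n) (x v : En n) :
    ⟪v, rotGen i j x⟫ = x i * v j - x j * v i := by
  rw [rotGen_apply, inner_sub_right, real_inner_smul_right, real_inner_smul_right]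
  simp [EuclideanSpace.inner_single_right]

lemma norm_rotGen_le {n : ℕ} (i j : Fin n) (x : En n) : ‖rotGen i j x‖ ≤ 2 * ‖x‖ := by
  rw [rotGen_apply]
  refine (norm_sub_le _ _).trans ?_
  rw [norm_smul, norm_smul]
  have h1 := abs_coord_le x i
  have h2 := abs_coord_le x j
  simp
  linarith

/-- On the cone the rotational momentum is conserved: the force term and the velocity term
cancel. -/
lemma cone_rot_cancel {n : ℕ} (α : ℝ) (i j : Fin n) (x v : En n) :
    1 / 2 * coneDer α x (rotGen i j x) v + coneMetric n α x v (rotGen i j v) = 0 := by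
  have h1 : ⟪x, rotGen i j x⟫ = 0 := by rw [inner_rotGen]; ring
  have h2 : ⟪v, rotGen i j v⟫ = 0 := by rw [inner_rotGen]; ring
  have h3 : ⟪rotGen i j v, x⟫ = -⟪v, rotGen i j x⟫ := by
    rw [real_inner_comm, inner_rotGen, inner_rotGen]; ring
  simp only [coneDer, coneMetric, h1, h2, h3]
  ring

/-- On the cone the rotational momentum is `sin² α` times the Euclidean angular momentum. -/
lemma cone_rot_momentum {n : ℕ} (α : ℝ) (i j : Fin n) (x v : En n) :
    coneMetric n α x v (rotGen i j x) = sin α ^ 2 * (x i * v j - x j * v i) := by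
  have h1 : ⟪rotGen i j x, x⟫ = 0 := by rw [real_inner_comm, inner_rotGen]; ring
  simp only [coneMetric, h1, inner_rotGen]
  ring

lemma coneDer_radial {n : ℕ} (α : ℝ) {x : En n} (hx : x ≠ 0) (v : En n) :
    coneDer α x x v = 0 := by
  have : ‖x‖ ≠ 0 := norm_ne_zero_iff.2 hx
  simp only [coneDer, real_inner_self_eq_norm_sq]
  field_simp
  ring

lemma coneMetric_radial {n : ℕ} (α : ℝ) {x : En n} (hx : x ≠ 0) (v : En n) :
    coneMetric n α x v x = ⟪v, x⟫ := by
  have : ‖x‖ ≠ 0 := norm_ne_zero_iff.2 hx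
  simp only [coneMetric, real_inner_self_eq_norm_sq]
  field_simp
  ring

lemma coneMetric_lower {n : ℕ} (α : ℝ) (x v : En n) :
    sin α ^ 2 * ‖v‖ ^ 2 ≤ coneMetric n α x v v := by
  simp only [coneMetric, real_inner_self_eq_norm_sq]
  have h1 : 0 ≤ 1 - sin α ^ 2 := by nlinarith [sin_sq_add_cos_sq α, sq_nonneg (cos α)]
  have h2 : 0 ≤ ⟪v, x⟫ * ⟪v, x⟫ / ‖x‖ ^ 2 := div_nonneg (mul_self_nonneg _) (sq_nonneg _)
  nlinarith [mul_nonneg h1 h2]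

lemma exists_small_rpow {ν : ℝ} (hν : 0 < ν) (C η : ℝ) (hη : 0 < η) (R0 : ℝ) :
    ∃ R1, R0 ≤ R1 ∧ ∀ x, R1 ≤ x → C * x ^ (-ν) ≤ η := by
  have h : Tendsto (fun x : ℝ => C * x ^ (-ν)) atTop (𝓝 (C * 0)) :=
    (tendsto_rpow_neg_atTop hν).const_mul C
  rw [mul_zero] at h
  obtain ⟨R1, hR1⟩ := eventually_atTop.1 (h.eventually (ge_mem_nhds hη))
  exact ⟨max R0 R1, le_max_left _ _, fun x hx => hR1 x ((le_max_right _ _).trans hx)⟩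

/-- A unit vector of `g` has bounded Euclidean norm near infinity. -/
lemma unit_bound {n : ℕ} {α : ℝ} (hα : 0 < sin α) {G : En n → Bil n} {x v : En n} {d : ℝ}
    (hd : d ≤ sin α ^ 2 / 2)
    (h : |G x v v - coneMetric n α x v v| ≤ d * ‖v‖ * ‖v‖) (h1 : G x v v = 1) :
    ‖v‖ ≤ 2 / sin α ^ 2 := by
  have hs : 0 < sin α ^ 2 := by positivity
  have hs1 : sin α ^ 2 ≤ 1 := sin_sq_le_one α
  have h2 := (abs_le.1 h).1
  have h3 := coneMetric_lower α x v
  have h4 : d * ‖v‖ * ‖v‖ ≤ sin α ^ 2 / 2 * ‖v‖ ^ 2 := by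
    nlinarith [mul_le_mul_of_nonneg_right hd (sq_nonneg ‖v‖)]
  rw [le_div_iff₀ hs]
  by_contra hc
  have h5 : sin α ^ 2 * ‖v‖ ^ 2 ≤ 2 := by linarith
  have h6 : 0 ≤ ‖v‖ := norm_nonneg v
  nlinarith

/-- Estimates at a point near infinity for a `g`-unit vector `v`: bounded Euclidean speed, growth
of the radial momentum, and near-conservation of the rotational momenta. -/
lemma pointwise_estimates {n : ℕ} {g : MetricTensor n} {α μ : ℝ} (hα : 0 < sin α) (hμ : 0 < μ)
    (hg : IsAsympConical n g α μ) (Rmin : ℝ) : ∃ C V R ν : ℝ, 0 ≤ C ∧ 0 ≤ V ∧ 1 ≤ R ∧ Rmin ≤ R ∧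
      0 < ν ∧ ν ≤ 1/2 ∧ ∀ x v : En n, R ≤ ‖x‖ → toBil g x v v = 1 →
        ‖v‖ ≤ V ∧ 1 / 2 ≤ force (toBil g) x v x + toBil g x v v ∧ |toBil g x v x| ≤ C * ‖x‖ ∧
        ∀ i j, |force (toBil g) x v (rotGen i j x) + toBil g x v (rotGen i j v)|
            ≤ C * ‖x‖ ^ (-ν) ∧
          |sin α ^ 2 * (x i * v j - x j * v i) - toBil g x v (rotGen i j x)|
            ≤ C * (‖x‖ ^ (-ν) * ‖x‖) := by
  obtain ⟨C, R0, ν, hC, hR0, hν, hν2, hdec⟩ := decay_estimates hμ hg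
  set V : ℝ := 2 / sin α ^ 2 with hV
  have hV0 : 0 ≤ V := by positivity
  obtain ⟨R1, hR1, hs1⟩ := exists_small_rpow hν C (sin α ^ 2 / 2) (by positivity) (max R0 Rmin)
  obtain ⟨R2, hR2, hs2⟩ := exists_small_rpow hν (C * V ^ 2) 1 one_pos R1
  refine ⟨3 * C * V ^ 2 + 2 * C * V + V + C * V, V, R2, ν, by positivity, hV0, ?_, ?_, hν, hν2, ?_⟩
  · linarith [le_max_left R0 Rmin]
  · linarith [le_max_right R0 Rmin]
  intro x v hx h1
  obtain ⟨hA, hB⟩ := hdec x (by linarith [le_max_left R0 Rmin])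
  have hx1 : 1 ≤ ‖x‖ := by linarith [le_max_left R0 Rmin]
  have hx0 : 0 < ‖x‖ := by linarith
  have hxne : x ≠ 0 := norm_pos_iff.1 hx0
  have hv : ‖v‖ ≤ V := unit_bound hα (hs1 _ (hR2.trans hx)) (hA v v) h1
  have hv0 : 0 ≤ ‖v‖ := norm_nonneg v
  set d := ‖x‖ ^ (-ν) with hd
  have hd0 : 0 ≤ d := by positivity
  have hd1 : d ≤ 1 := Real.rpow_le_one_of_one_le_of_nonpos hx1 (by linarith)
  refine ⟨hv, ?_, ?_, fun i j => ⟨?_, ?_⟩⟩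
  · have h := hB x v
    rw [coneDer_radial α hxne, sub_zero] at h
    have h3 : C * (d * ‖x‖⁻¹ * ‖x‖) * ‖v‖ * ‖v‖ ≤ C * V ^ 2 * d := by
      rw [mul_assoc d, inv_mul_cancel₀ hx0.ne', mul_one]
      calc C * d * ‖v‖ * ‖v‖ ≤ C * d * V * V := by gcongr
        _ = _ := by ring
    have h4 := hs2 _ hx
    rw [force_apply, h1]
    linarith [(abs_le.1 h).1]
  · have h := hA v x
    rw [coneMetric_radial α hxne] at h
    have h3 : |⟪v, x⟫| ≤ V * ‖x‖ := (abs_real_inner_le_norm v x).trans (by gcongr)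
    have h4 : C * d * ‖v‖ * ‖x‖ ≤ C * V * ‖x‖ := by
      calc C * d * ‖v‖ * ‖x‖ ≤ C * 1 * V * ‖x‖ := by gcongr
        _ = _ := by ring
    have h5 := abs_sub_abs_le_abs_sub (toBil g x v x) ⟪v, x⟫
    have h6 : 0 ≤ (3 * C * V ^ 2 + 2 * C * V) * ‖x‖ := by positivity
    nlinarith
  · have ha := hB (rotGen i j x) v
    have hb := hA v (rotGen i j v)
    have hc := cone_rot_cancel α i j x v
    rw [force_apply]
    have e : 1 / 2 * fderiv ℝ (toBil g) x (rotGen i j x) v v + toBil g x v (rotGen i j v) =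
        1 / 2 * (fderiv ℝ (toBil g) x (rotGen i j x) v v - coneDer α x (rotGen i j x) v) +
        (toBil g x v (rotGen i j v) - coneMetric n α x v (rotGen i j v)) := by linarith
    rw [e]
    have h3 : C * (d * ‖x‖⁻¹ * ‖rotGen i j x‖) * ‖v‖ * ‖v‖ ≤ 2 * C * V ^ 2 * d := by
      calc C * (d * ‖x‖⁻¹ * ‖rotGen i j x‖) * ‖v‖ * ‖v‖
          ≤ C * (d * ‖x‖⁻¹ * (2 * ‖x‖)) * V * V := by
            gcongr
            exact norm_rotGen_le i j x
        _ = _ := by field_simp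
    have h4 : C * d * ‖v‖ * ‖rotGen i j v‖ ≤ 2 * C * V ^ 2 * d := by
      calc C * d * ‖v‖ * ‖rotGen i j v‖ ≤ C * d * V * (2 * V) := by
            gcongr
            exact (norm_rotGen_le i j v).trans (by linarith)
        _ = _ := by ring
    have h6 : 0 ≤ (2 * C * V + V + C * V) * d := by positivity
    refine (abs_add_le _ _).trans ?_
    rw [abs_mul, abs_of_pos (by norm_num : (0:ℝ) < 1/2)]
    nlinarith
  · have hb := hA v (rotGen i j x)
    rw [cone_rot_momentum, abs_sub_comm] at hb
    refine hb.trans ?_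
    have h4 : C * d * ‖v‖ * ‖rotGen i j x‖ ≤ 2 * C * V * (d * ‖x‖) := by
      calc C * d * ‖v‖ * ‖rotGen i j x‖ ≤ C * d * V * (2 * ‖x‖) := by
            gcongr
            exact norm_rotGen_le i j x
        _ = _ := by ring
    have h6 : 0 ≤ (3 * C * V ^ 2 + V + C * V) * (d * ‖x‖) := by positivity
    nlinarith

/-! ### Integration of the estimates along the curve -/

/-- A function whose derivative is dominated by that of `β` varies at most as much as `β`. -/
lemma abs_sub_le_of_deriv {u u' β β' : ℝ → ℝ} {a b : ℝ} (hab : a ≤ b)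
    (hu : ContinuousOn u (Icc a b)) (hβ : ContinuousOn β (Icc a b))
    (hu' : ∀ t ∈ Ioo a b, HasDerivAt u (u' t) t) (hβ' : ∀ t ∈ Ioo a b, HasDerivAt β (β' t) t)
    (h : ∀ t ∈ Ioo a b, |u' t| ≤ β' t) : |u b - u a| ≤ β b - β a := by
  have h1 : MonotoneOn (fun t => β t - u t) (Icc a b) := by
    refine monotoneOn_of_deriv_nonneg (convex_Icc a b) (hβ.sub hu) ?_ ?_
    · rw [interior_Icc]
      exact fun t ht => ((hβ' t ht).sub (hu' t ht)).differentiableAt.differentiableWithinAt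
    · rw [interior_Icc]
      intro t ht
      rw [((hβ' t ht).fun_sub (hu' t ht)).deriv]
      linarith [(abs_le.1 (h t ht)).2]
  have h2 : MonotoneOn (fun t => β t + u t) (Icc a b) := by
    refine monotoneOn_of_deriv_nonneg (convex_Icc a b) (hβ.add hu) ?_ ?_
    · rw [interior_Icc]
      exact fun t ht => ((hβ' t ht).add (hu' t ht)).differentiableAt.differentiableWithinAt
    · rw [interior_Icc]
      intro t ht
      rw [((hβ' t ht).fun_add (hu' t ht)).deriv]
      linarith [(abs_le.1 (h t ht)).1]
  have h3 := h1 (left_mem_Icc.2 hab) (right_mem_Icc.2 hab) hab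
  have h4 := h2 (left_mem_Icc.2 hab) (right_mem_Icc.2 hab) hab
  simp only at h3 h4
  exact abs_le.2 ⟨by linarith, by linarith⟩

/-- If the radial momentum `P` grows at rate at least `1 / 2` and is controlled by the radius,
then the radius grows at least linearly in the time remaining to `t0`. -/
lemma time_le_radius {P P' x : ℝ → ℝ} {C R t0 : ℝ} (hC : 0 ≤ C) (hR : 1 ≤ R)
    (hP : ∀ t ∈ Ioc 0 t0, HasDerivAt P (P' t) t) (hP' : ∀ t ∈ Ioc 0 t0, 1 / 2 ≤ P' t)
    (hPx : ∀ t ∈ Ioc 0 t0, |P t| ≤ C * x t) (hx : ∀ t ∈ Ioc 0 t0, R ≤ x t) (hx0 : x t0 = R)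
    {t : ℝ} (ht : t ∈ Ioc 0 t0) : 1 + t0 - t ≤ (4 * C + 1) * x t := by
  have hsub : ∀ s ∈ Icc t t0, s ∈ Ioc 0 t0 := fun s hs => ⟨ht.1.trans_le hs.1, hs.2⟩
  have h1 : MonotoneOn (fun t => P t - t / 2) (Icc t t0) := by
    have hd : ∀ s ∈ Icc t t0, HasDerivAt (fun t => P t - t / 2) (P' s - 1 / 2) s := fun s hs =>
      (hP s (hsub s hs)).fun_sub ((hasDerivAt_id s).div_const 2)
    refine monotoneOn_of_deriv_nonneg (convex_Icc t t0)
      (fun s hs => (hd s hs).continuousAt.continuousWithinAt) ?_ ?_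
    · exact fun s hs => (hd s (interior_subset hs)).differentiableAt.differentiableWithinAt
    · intro s hs
      rw [(hd s (interior_subset hs)).deriv]
      linarith [hP' s (hsub s (interior_subset hs))]
  have h2 := h1 (left_mem_Icc.2 ht.2) (right_mem_Icc.2 ht.2) ht.2
  simp only at h2
  have h3 := hPx t ht
  have h4 := hPx t0 ⟨ht.1.trans_le ht.2, le_rfl⟩
  rw [hx0] at h4
  have h5 := hx t ht
  have h6 := (abs_le.1 h3).1
  have h7 := (abs_le.1 h4).2
  nlinarith [mul_le_mul_of_nonneg_left h5 hC]

lemma hasDerivAt_rpow_time {t0 t p : ℝ} (ht : t ≤ t0) :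
    HasDerivAt (fun t : ℝ => (1 + t0 - t) ^ p) (-(p * (1 + t0 - t) ^ (p - 1))) t := by
  have h : HasDerivAt (fun t : ℝ => 1 + t0 - t) (-1) t := (hasDerivAt_id t).const_sub (1 + t0)
  have := h.rpow_const (p := p) (Or.inl (by linarith : 1 + t0 - t ≠ 0))
  exact this.congr_deriv (by ring)

lemma rpow_neg_le_of_le_mul {s D x p : ℝ} (hs : 0 < s) (hD : 1 ≤ D) (h : s ≤ D * x)
    (hp : 0 ≤ p) : x ^ (-p) ≤ D ^ p * s ^ (-p) := by
  have hx : 0 < x := by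
    by_contra hx
    nlinarith
  have h1 : (D * x) ^ (-p) ≤ s ^ (-p) := Real.rpow_le_rpow_of_nonpos hs h (by linarith)
  rw [Real.mul_rpow (by linarith) hx.le, Real.rpow_neg (by linarith)] at h1
  have hDp : 0 < D ^ p := by positivity
  calc x ^ (-p) = D ^ p * ((D ^ p)⁻¹ * x ^ (-p)) := by field_simp
    _ ≤ _ := by gcongr

/-- Growth of a rotational momentum `Q` backwards from `t0`. -/
lemma momentum_growth {Q Q' x : ℝ → ℝ} {C D K t0 ν : ℝ} (hC : 0 ≤ C) (hD : 1 ≤ D) (hK : 0 ≤ K)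
    (hν : 0 < ν) (hν2 : ν ≤ 1/2)
    (hQ : ∀ t ∈ Ioc 0 t0, HasDerivAt Q (Q' t) t)
    (hQ' : ∀ t ∈ Ioc 0 t0, |Q' t| ≤ C * x t ^ (-ν))
    (hQ0 : |Q t0| ≤ K) (hsD : ∀ t ∈ Ioc 0 t0, 1 + t0 - t ≤ D * x t)
    {t : ℝ} (ht : t ∈ Ioc 0 t0) :
    |Q t| ≤ (K + C * D ^ ν * 2) * (1 + t0 - t) ^ (1 - ν) := by
  have hsub : ∀ s ∈ Icc t t0, s ∈ Ioc 0 t0 := fun s hs => ⟨ht.1.trans_le hs.1, hs.2⟩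
  have hDν : 0 < D ^ ν := by positivity
  have hν1 : 0 < 1 - ν := by linarith
  have hβ : ∀ s ∈ Icc t t0, HasDerivAt
      (fun s : ℝ => -(C * D ^ ν / (1 - ν)) * (1 + t0 - s) ^ (1 - ν))
      (C * (D ^ ν * (1 + t0 - s) ^ (-ν))) s := fun s hs => by
    refine ((hasDerivAt_rpow_time (p := 1 - ν) hs.2).const_mul _).congr_deriv ?_
    rw [show 1 - ν - 1 = -ν by ring]
    field_simp
  have h1 := abs_sub_le_of_deriv (u := Q) (u' := Q') ht.2
    (fun s hs => (hQ s (hsub s hs)).continuousAt.continuousWithinAt)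
    (fun s hs => (hβ s hs).continuousAt.continuousWithinAt)
    (fun s hs => hQ s (hsub s (Ioo_subset_Icc_self hs)))
    (fun s hs => hβ s (Ioo_subset_Icc_self hs))
    (fun s hs => (hQ' s (hsub s (Ioo_subset_Icc_self hs))).trans (by
      have := rpow_neg_le_of_le_mul (by linarith [hs.2]) hD
        (hsD s (hsub s (Ioo_subset_Icc_self hs))) hν.le
      gcongr))
  have h2 : 1 ≤ (1 + t0 - t) ^ (1 - ν) := Real.one_le_rpow (by linarith [ht.2]) hν1.le
  have h3 : C * D ^ ν / (1 - ν) ≤ C * D ^ ν * 2 := by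
    rw [div_le_iff₀ hν1]
    nlinarith [mul_nonneg hC hDν.le]
  have h4 : 0 ≤ C * D ^ ν / (1 - ν) := by positivity
  have h5 := abs_sub_abs_le_abs_sub (Q t) (Q t0)
  rw [abs_sub_comm] at h5
  have h6 : (1 + t0 - t0) ^ (1 - ν) = 1 := by simp
  rw [h6] at h1
  nlinarith

/-- Derivative of a coordinate of the direction `γ / ‖γ‖` in terms of the angular momenta. -/
lemma hasDerivAt_direction {n : ℕ} {γ : ℝ → En n} {v : En n} {t : ℝ} (hγ : HasDerivAt γ v t)
    (h0 : γ t ≠ 0) (j : Fin n) : HasDerivAt (fun t => ‖γ t‖⁻¹ * γ t j)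
      ((∑ i, γ t i * (γ t i * v j - γ t j * v i)) / ‖γ t‖ ^ 3) t := by
  have hn : ‖γ t‖ ≠ 0 := norm_ne_zero_iff.2 h0
  have h1 : HasDerivAt (fun t => ‖γ t‖) (⟪γ t, v⟫ / ‖γ t‖) t := by
    have h := hγ.norm_sq.sqrt (pow_ne_zero 2 hn)
    simp only [Real.sqrt_sq (norm_nonneg _)] at h
    exact h.congr_deriv (by field_simp)
  have h2 : HasDerivAt (fun t => γ t j) (v j) t :=
    (EuclideanSpace.proj j : En n →L[ℝ] ℝ).hasFDerivAt.comp_hasDerivAt t hγ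
  refine ((h1.fun_inv hn).fun_mul h2).congr_deriv ?_
  have e1 : ∑ i, γ t i * γ t i = ‖γ t‖ ^ 2 := by
    rw [EuclideanSpace.real_norm_sq_eq]
    exact Finset.sum_congr rfl fun i _ => by ring
  have e2 : ∑ i, γ t i * v i = ⟪γ t, v⟫ := by
    rw [PiLp.inner_apply]
    exact Finset.sum_congr rfl fun i _ => by simp [mul_comm]
  have e3 : ∑ i, γ t i * (γ t i * v j - γ t j * v i) =
      ‖γ t‖ ^ 2 * v j - γ t j * ⟪γ t, v⟫ := by
    rw [← e1, ← e2, Finset.sum_mul, Finset.mul_sum, ← Finset.sum_sub_distrib]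
    exact Finset.sum_congr rfl fun i _ => by ring
  rw [e3]
  field_simp
  ring

lemma direction_speed {n : ℕ} (x v : En n) {K : ℝ} (hx : x ≠ 0) (j : Fin n)
    (h : ∀ i j, |x i * v j - x j * v i| ≤ K) :
    |(∑ i, x i * (x i * v j - x j * v i)) / ‖x‖ ^ 3| ≤ n * (K * ‖x‖ ^ (-2 : ℝ)) := by
  have hn : 0 < ‖x‖ := norm_pos_iff.2 hx
  have h1 : |∑ i, x i * (x i * v j - x j * v i)| ≤ n * (‖x‖ * K) := by
    refine (Finset.abs_sum_le_sum_abs _ _).trans ?_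
    refine (Finset.sum_le_card_nsmul _ _ (‖x‖ * K) fun i _ => ?_).trans (by simp)
    rw [abs_mul]
    exact mul_le_mul (abs_coord_le x i) (h i j) (abs_nonneg _) hn.le
  rw [abs_div, abs_of_pos (by positivity : 0 < ‖x‖ ^ 3), div_le_iff₀ (by positivity),
    Real.rpow_neg hn.le, Real.rpow_two]
  refine h1.trans_eq ?_
  field_simp

/-- The angular speed bound: the momentum bound turns into an integrable bound on the speed of the
direction. -/
lemma angular_bound {x s A B D ν : ℝ} (hA : 0 ≤ A) (hB : 0 ≤ B) (hs : 0 < s) (hD : 1 ≤ D)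
    (h : s ≤ D * x) (hν : 0 < ν) :
    (A * s ^ (1 - ν) + B * (x ^ (-ν) * x)) * x ^ (-2 : ℝ) ≤
      (A * D ^ (2 : ℝ) + B * D ^ (1 + ν)) * s ^ (-1 - ν) := by
  have hx : 0 < x := by
    by_contra hx
    nlinarith
  have h1 := rpow_neg_le_of_le_mul hs hD h (by norm_num : (0:ℝ) ≤ 2)
  have h2 := rpow_neg_le_of_le_mul hs hD h (by linarith : (0:ℝ) ≤ 1 + ν)
  have e1 : s ^ (1 - ν) * s ^ (-2 : ℝ) = s ^ (-1 - ν) := by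
    rw [← Real.rpow_add hs]; congr 1; ring
  have e2 : x ^ (-ν) * x * x ^ (-2 : ℝ) = x ^ (-(1 + ν)) := by
    have : x ^ (-ν) * x = x ^ (-ν + 1) := by rw [Real.rpow_add hx, Real.rpow_one]
    rw [this, ← Real.rpow_add hx]; congr 1; ring
  have e3 : -(1 + ν) = -1 - ν := by ring
  calc (A * s ^ (1 - ν) + B * (x ^ (-ν) * x)) * x ^ (-2 : ℝ)
      = A * s ^ (1 - ν) * x ^ (-2 : ℝ) + B * (x ^ (-ν) * x * x ^ (-2 : ℝ)) := by ring
    _ ≤ A * s ^ (1 - ν) * (D ^ (2:ℝ) * s ^ (-2 : ℝ)) + B * (D ^ (1 + ν) * s ^ (-(1 + ν))) := by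
        rw [e2]; gcongr
    _ = A * D ^ (2:ℝ) * (s ^ (1 - ν) * s ^ (-2 : ℝ)) + B * (D ^ (1 + ν) * s ^ (-(1 + ν))) := by
        ring
    _ = _ := by rw [e1, e3]; ring

/-- Integrating an angular speed bound `L s^(-1-ν)`, `s = 1 + t0 - t` one plus the time
remaining to `t0`. -/
lemma direction_variation {n : ℕ} {γ v : ℝ → En n} {L ν t0 t : ℝ} (hL : 0 ≤ L) (hν : 0 < ν)
    (hc : ContinuousOn γ (Icc 0 t0)) (hne : ∀ s ∈ Icc 0 t0, γ s ≠ 0)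
    (hd : ∀ s ∈ Ioc 0 t0, HasDerivAt γ (v s) s)
    (hb : ∀ s ∈ Ioc 0 t0, ∀ j,
      |(∑ i, γ s i * (γ s i * v s j - γ s j * v s i)) / ‖γ s‖ ^ 3| ≤ L * (1 + t0 - s) ^ (-1 - ν))
    (ht : t ∈ Ioc 0 t0) (j : Fin n) :
    |‖γ t‖⁻¹ * γ t j - ‖γ 0‖⁻¹ * γ 0 j| ≤ L / ν * (1 + t0 - t) ^ (-ν) := by
  have hsub : Icc 0 t ⊆ Icc 0 t0 := Icc_subset_Icc_right ht.2
  have hsub' : ∀ s ∈ Ioo 0 t, s ∈ Ioc 0 t0 := fun s hs => ⟨hs.1, hs.2.le.trans ht.2⟩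
  have hβ : ∀ s ∈ Icc 0 t, HasDerivAt (fun s : ℝ => L / ν * (1 + t0 - s) ^ (-ν))
      (L * (1 + t0 - s) ^ (-1 - ν)) s := fun s hs => by
    refine ((hasDerivAt_rpow_time (p := -ν) (hs.2.trans ht.2)).const_mul _).congr_deriv ?_
    rw [show -ν - 1 = -1 - ν by ring]
    field_simp
  have hu : ContinuousOn (fun s => ‖γ s‖⁻¹ * γ s j) (Icc 0 t) := by
    have h1 : ContinuousOn (fun s => ‖γ s‖) (Icc 0 t) := (hc.mono hsub).norm
    have h2 : ContinuousOn (fun s => γ s j) (Icc 0 t) :=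
      (EuclideanSpace.proj j : En n →L[ℝ] ℝ).continuous.comp_continuousOn (hc.mono hsub)
    exact (h1.inv₀ fun s hs => norm_ne_zero_iff.2 (hne s (hsub hs))).mul h2
  have h1 := abs_sub_le_of_deriv ht.1.le hu
    (fun s hs => (hβ s hs).continuousAt.continuousWithinAt)
    (fun s hs => hasDerivAt_direction (hd s (hsub' s hs))
      (hne s (hsub (Ioo_subset_Icc_self hs))) j)
    (fun s hs => hβ s (Ioo_subset_Icc_self hs)) (fun s hs => hb s (hsub' s hs) j)
  have h2 : 0 ≤ L / ν * (1 + t0 - 0) ^ (-ν) :=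
    mul_nonneg (by positivity) (Real.rpow_nonneg (by linarith [ht.1, ht.2]) _)
  linarith

lemma norm_le_sum_coord {n : ℕ} (x : En n) {K : ℝ} (h : ∀ j, |x j| ≤ K) : ‖x‖ ≤ n * K := by
  have hx : x = ∑ i, x i • (EuclideanSpace.single i 1 : En n) := by
    have := (EuclideanSpace.basisFun (Fin n) ℝ).sum_repr x
    simpa using this.symm
  rw [hx]
  refine (norm_sum_le _ _).trans ?_
  refine (Finset.sum_le_card_nsmul _ _ K fun i _ => ?_).trans (by simp)
  rw [norm_smul]
  simpa using h i

/-- Bounded Euclidean speed bounds the radius by the time remaining to `t0`. -/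
lemma radius_le_time {n : ℕ} {γ v : ℝ → En n} {V R t0 t : ℝ} (hV : 0 ≤ V) (hR : 1 ≤ R)
    (hd : ∀ s ∈ Ioc 0 t0, HasDerivAt γ (v s) s) (hv : ∀ s ∈ Ioc 0 t0, ‖v s‖ ≤ V)
    (hR0 : ‖γ t0‖ = R) (ht : t ∈ Ioc 0 t0) : ‖γ t‖ ≤ (R + V) * (1 + t0 - t) := by
  have hsub : ∀ s ∈ Icc t t0, s ∈ Ioc 0 t0 := fun s hs => ⟨ht.1.trans_le hs.1, hs.2⟩
  have h := norm_image_sub_le_of_norm_deriv_le_segment' (f := γ) (f' := v) (C := V)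
    (fun s hs => (hd s (hsub s hs)).hasDerivWithinAt)
    (fun s hs => hv s (hsub s (Ico_subset_Icc_self hs))) t0 (right_mem_Icc.2 ht.2)
  have h1 := norm_sub_norm_le (γ t) (γ t0)
  rw [norm_sub_rev] at h1
  nlinarith [ht.2]

/-- A curve, far from the origin until it first meets the sphere of radius `R`, with growing radial
momentum `P` and nearly conserved rotational momenta `Q i j`, barely turns. -/
lemma barely_turns (n : ℕ) {C V R ν σ : ℝ} (hC : 0 ≤ C) (hV : 0 ≤ V) (hR : 1 ≤ R) (hν : 0 < ν)
    (hν2 : ν ≤ 1/2) (hσ : 0 < σ) : ∃ K : ℝ, 0 ≤ K ∧ ∀ (γ v : ℝ → En n) (P P' : ℝ → ℝ)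
      (Q Q' : Fin n → Fin n → ℝ → ℝ) (t0 : ℝ), ContinuousOn γ (Icc 0 t0) →
      (∀ t ∈ Icc 0 t0, R ≤ ‖γ t‖) → ‖γ t0‖ = R →
      (∀ t ∈ Ioc 0 t0, HasDerivAt γ (v t) t ∧ ‖v t‖ ≤ V ∧ HasDerivAt P (P' t) t ∧ 1 / 2 ≤ P' t ∧
        |P t| ≤ C * ‖γ t‖ ∧ ∀ i j, HasDerivAt (Q i j) (Q' i j t) t ∧
          |Q' i j t| ≤ C * ‖γ t‖ ^ (-ν) ∧
          |σ * (γ t i * v t j - γ t j * v t i) - Q i j t| ≤ C * (‖γ t‖ ^ (-ν) * ‖γ t‖)) →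
      ∀ t ∈ Ioc 0 t0, ‖‖γ t‖⁻¹ • γ t - ‖γ 0‖⁻¹ • γ 0‖ ≤ K * ‖γ t‖ ^ (-ν) := by
  set D := 4 * C + 1 with hD
  have hD1 : 1 ≤ D := by linarith
  set K0 := σ * (2 * R * V) + C * R with hK0
  have hK0' : 0 ≤ K0 := by positivity
  set A := (K0 + C * D ^ ν * 2) / σ with hA
  have hA' : 0 ≤ A := by positivity
  set B := C / σ with hB
  have hB' : 0 ≤ B := by positivity
  set L := n * (A * D ^ (2:ℝ) + B * D ^ (1 + ν)) with hL
  have hL' : 0 ≤ L := by positivity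
  have hE : 0 < R + V := by linarith
  refine ⟨n * (L / ν * (R + V) ^ ν), by positivity, ?_⟩
  intro γ v P P' Q Q' t0 hc hfar ht0 hall t ht
  have h00 : 0 < t0 := ht.1.trans_le ht.2
  have hI : t0 ∈ Ioc 0 t0 := ⟨h00, le_rfl⟩
  have hne : ∀ s ∈ Icc 0 t0, γ s ≠ 0 := fun s hs =>
    norm_pos_iff.1 (by linarith [hfar s hs])
  have hs : ∀ s ∈ Ioc 0 t0, 1 + t0 - s ≤ D * ‖γ s‖ := fun s hs =>
    time_le_radius (x := fun s => ‖γ s‖) hC hR (fun t ht => (hall t ht).2.2.1)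
      (fun t ht => (hall t ht).2.2.2.1) (fun t ht => (hall t ht).2.2.2.2.1)
      (fun t ht => hfar t (Ioc_subset_Icc_self ht)) ht0 hs
  have hQ0 : ∀ i j, |Q i j t0| ≤ K0 := by
    intro i j
    obtain ⟨-, hv, -, -, -, hq⟩ := hall t0 hI
    have h1 := (hq i j).2.2
    rw [ht0] at h1
    have h2 : R ^ (-ν) ≤ 1 := Real.rpow_le_one_of_one_le_of_nonpos hR (by linarith)
    have ha := (abs_coord_le (γ t0) i).trans_eq ht0
    have hb := (abs_coord_le (γ t0) j).trans_eq ht0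
    have hva := (abs_coord_le (v t0) i).trans hv
    have hvb := (abs_coord_le (v t0) j).trans hv
    have h3 : |γ t0 i * v t0 j - γ t0 j * v t0 i| ≤ 2 * R * V := by
      refine (abs_sub _ _).trans ?_
      rw [abs_mul, abs_mul]
      have := mul_le_mul ha hvb (abs_nonneg _) (by linarith)
      have := mul_le_mul hb hva (abs_nonneg _) (by linarith)
      linarith
    have h4 : C * (R ^ (-ν) * R) ≤ C * R := by
      calc C * (R ^ (-ν) * R) ≤ C * (1 * R) := by gcongr
        _ = _ := by ring
    have h5 : |σ * (γ t0 i * v t0 j - γ t0 j * v t0 i)| ≤ σ * (2 * R * V) := by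
      rw [abs_mul, abs_of_pos hσ]; gcongr
    have h6 := abs_sub_abs_le_abs_sub (Q i j t0) (σ * (γ t0 i * v t0 j - γ t0 j * v t0 i))
    rw [abs_sub_comm] at h6
    linarith
  have hb : ∀ s ∈ Ioc 0 t0, ∀ j,
      |(∑ i, γ s i * (γ s i * v s j - γ s j * v s i)) / ‖γ s‖ ^ 3|
        ≤ L * (1 + t0 - s) ^ (-1 - ν) := by
    intro s hs' j
    obtain ⟨-, hv, -, -, -, hq⟩ := hall s hs'
    have h1 : ∀ i j, |γ s i * v s j - γ s j * v s i| ≤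
        A * (1 + t0 - s) ^ (1 - ν) + B * (‖γ s‖ ^ (-ν) * ‖γ s‖) := by
      intro i j
      have h2 := momentum_growth (Q := Q i j) (x := fun s => ‖γ s‖) hC hD1 hK0' hν hν2
        (fun t ht => ((hall t ht).2.2.2.2.2 i j).1) (fun t ht => ((hall t ht).2.2.2.2.2 i j).2.1)
        (hQ0 i j) hs hs'
      have h3 := (hq i j).2.2
      have h4 := abs_sub_abs_le_abs_sub (σ * (γ s i * v s j - γ s j * v s i)) (Q i j s)
      rw [abs_mul, abs_of_pos hσ] at h4
      rw [hA, hB, div_mul_eq_mul_div, div_mul_eq_mul_div, ← add_div, le_div_iff₀ hσ]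
      linarith
    refine (direction_speed (γ s) (v s) (hne s (Ioc_subset_Icc_self hs')) j h1).trans ?_
    rw [hL, mul_assoc]
    refine mul_le_mul_of_nonneg_left ?_ (Nat.cast_nonneg n)
    exact angular_bound hA' hB' (by linarith [hs'.2]) hD1 (hs s hs') hν
  have hvar := direction_variation hL' hν hc hne (fun s hs => (hall s hs).1) hb ht
  have hrad := radius_le_time hV hR (fun s hs => (hall s hs).1) (fun s hs => (hall s hs).2.1) ht0 ht
  have hx0 : 0 < ‖γ t‖ := norm_pos_iff.2 (hne t (Ioc_subset_Icc_self ht))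
  have hpow : (1 + t0 - t) ^ (-ν) ≤ (R + V) ^ ν * ‖γ t‖ ^ (-ν) :=
    rpow_neg_le_of_le_mul hx0 (by linarith) hrad hν.le
  rw [mul_assoc]
  refine norm_le_sum_coord _ fun j => ?_
  calc |(‖γ t‖⁻¹ • γ t - ‖γ 0‖⁻¹ • γ 0) j| = |‖γ t‖⁻¹ * γ t j - ‖γ 0‖⁻¹ * γ 0 j| := by simp
    _ ≤ L / ν * (1 + t0 - t) ^ (-ν) := hvar j
    _ ≤ L / ν * ((R + V) ^ ν * ‖γ t‖ ^ (-ν)) := by gcongr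
    _ = _ := by ring

/-! ### Directions of first entry and last exit -/

lemma toBil_eq {n : ℕ} {g : MetricTensor n} {α μ : ℝ} (hg : IsAsympConical n g α μ) (x v w : En n) :
    toBil g x v w = g x v w :=
  congrFun (congrFun (congrFun (asTensor_toBil hg) x) v) w

/-- Along a geodesic, the momentum paired with a linear vector field `B` evolves by the
Euler–Lagrange equation. Radial and rotational momenta are the cases `B = id` and `B = rotGen i j`. -/
lemma geodesic_momenta {n : ℕ} {g : MetricTensor n} {α μ : ℝ} (hg : IsAsympConical n g α μ)
    {γ : ℝ → En n} {T t : ℝ} (hγ : IsGeodesicOn (rdist g) γ 1 (Icc 0 T)) (ht : t ∈ Ioo 0 T) :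
    HasDerivAt γ (deriv γ t) t ∧ toBil g (γ t) (deriv γ t) (deriv γ t) = 1 ∧
      ∀ B : En n →L[ℝ] En n, HasDerivAt (fun t => toBil g (γ t) (deriv γ t) (B (γ t)))
        (force (toBil g) (γ t) (deriv γ t) (B (γ t)) +
          toBil g (γ t) (deriv γ t) (B (deriv γ t))) t := by
  rw [← asTensor_toBil hg] at hγ
  obtain ⟨h1, h2, h3⟩ := geod_regular (contDiff_toBil hg)
    (fun x v w => by rw [toBil_eq hg, toBil_eq hg, hg.symm])
    (fun x v hv => by rw [toBil_eq hg]; exact hg.posdef x v hv) hγ ht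
  refine ⟨h1, h2, fun B => ?_⟩
  exact h3.clm_apply (B.hasFDerivAt.comp_hasDerivAt t h1)

lemma geodesic_continuousOn {n : ℕ} {g : MetricTensor n} {α μ : ℝ} (hg : IsAsympConical n g α μ)
    {γ : ℝ → En n} {T : ℝ} (hγ : IsGeodesicOn (rdist g) γ 1 (Icc 0 T)) :
    ContinuousOn γ (Icc 0 T) := by
  rw [← asTensor_toBil hg] at hγ
  exact geod_continuousOn (contDiff_toBil hg)
    (fun x v hv => by rw [toBil_eq hg]; exact hg.posdef x v hv) hγ

/-- The first time at which a continuous curve starting outside a ball meets it. -/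
lemma exists_first_entry {n : ℕ} {γ : ℝ → En n} {T R : ℝ} (hc : ContinuousOn γ (Icc 0 T))
    (h0 : R < ‖γ 0‖) (hex : ∃ t ∈ Icc 0 T, ‖γ t‖ ≤ R) :
    ∃ t0 ∈ Icc 0 T, ‖γ t0‖ = R ∧ ∀ t ∈ Icc 0 t0, R ≤ ‖γ t‖ := by
  have hcl : IsClosed (Icc 0 T ∩ (fun t => ‖γ t‖) ⁻¹' Iic R) :=
    hc.norm.preimage_isClosed_of_isClosed isClosed_Icc isClosed_Iic
  have hcp : IsCompact (Icc 0 T ∩ (fun t => ‖γ t‖) ⁻¹' Iic R) :=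
    isCompact_Icc.of_isClosed_subset hcl inter_subset_left
  obtain ⟨t1, ht1, ht1'⟩ := hex
  obtain ⟨t0, ⟨ht0, ht0R⟩, hmin⟩ := hcp.exists_isLeast ⟨t1, ht1, ht1'⟩
  have hcn : ContinuousOn (fun t => ‖γ t‖) (Icc 0 t0) :=
    (hc.mono (Icc_subset_Icc_right ht0.2)).norm
  obtain ⟨s, hs, hsR⟩ := intermediate_value_Icc' ht0.1 hcn (⟨ht0R, h0.le⟩ : R ∈ Icc _ _)
  have hst : s = t0 :=
    le_antisymm hs.2 (hmin ⟨⟨hs.1, hs.2.trans ht0.2⟩, (le_of_eq hsR : ‖γ s‖ ≤ R)⟩)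
  have hR0 : ‖γ t0‖ = R := hst ▸ hsR
  refine ⟨t0, ht0, hR0, fun t ht => ?_⟩
  by_contra hlt
  have : t0 ≤ t := hmin ⟨⟨ht.1, ht.2.trans ht0.2⟩, (not_le.1 hlt).le⟩
  rw [le_antisymm ht.2 this, hR0] at hlt
  exact hlt le_rfl

/-- A geodesic coming in from far away and entering a fixed ball hits each large sphere for the
first time in nearly the direction of its starting point. -/
lemma first_hit_direction {n : ℕ} {g : MetricTensor n} {α μ : ℝ} (hα : 0 < sin α) (hμ : 0 < μ)
    (hg : IsAsympConical n g α μ) (Rmin : ℝ) : ∃ R K ν : ℝ, 0 < ν ∧ 0 < R ∧ Rmin ≤ R ∧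
      ∀ (γ : ℝ → En n) (T r tm : ℝ), IsGeodesicOn (rdist g) γ 1 (Icc 0 T) →
        (∃ t ∈ Icc 0 T, ‖γ t‖ ≤ Rmin) → R < r → r < ‖γ 0‖ → r < ‖γ T‖ →
        IsLeast {t | t ∈ Icc 0 T ∧ ‖γ t‖ = r} tm →
        ‖r⁻¹ • γ tm - ‖γ 0‖⁻¹ • γ 0‖ ≤ K * r ^ (-ν) := by
  obtain ⟨C, V, R, ν, hC, hV, hR, hRm, hν, hν2, hpt⟩ := pointwise_estimates hα hμ hg Rmin
  obtain ⟨K, hK, hturn⟩ := barely_turns n hC hV hR hν hν2 (by positivity : 0 < sin α ^ 2)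
  refine ⟨R, K, ν, hν, by linarith, hRm, ?_⟩
  intro γ T r tm hγ hex hr h0 hT htm
  have hc := geodesic_continuousOn hg hγ
  obtain ⟨t1, ht1, ht1'⟩ := hex
  obtain ⟨t0, ht0, hR0, hfar⟩ := exists_first_entry hc (hr.trans h0) ⟨t1, ht1, ht1'.trans hRm⟩
  have hc0 : ContinuousOn γ (Icc 0 t0) := hc.mono (Icc_subset_Icc_right ht0.2)
  have htm0 : tm ≤ t0 := by
    obtain ⟨s, hs, hsr⟩ := intermediate_value_Icc' ht0.1 hc0.norm
      (⟨by rw [hR0]; exact hr.le, h0.le⟩ : r ∈ Icc _ _)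
    exact (htm.2 ⟨⟨hs.1, hs.2.trans ht0.2⟩, hsr⟩).trans hs.2
  have htmpos : 0 < tm := by
    refine lt_of_le_of_ne htm.1.1.1 fun h => ?_
    rw [h, htm.1.2] at h0
    exact lt_irrefl _ h0
  have ht0T : t0 < T := by
    refine lt_of_le_of_ne ht0.2 fun h => ?_
    rw [← h, hR0] at hT
    linarith
  have key := hturn γ (deriv γ) (fun t => toBil g (γ t) (deriv γ t) (γ t))
    (fun t => force (toBil g) (γ t) (deriv γ t) (γ t) + toBil g (γ t) (deriv γ t) (deriv γ t))
    (fun i j t => toBil g (γ t) (deriv γ t) (rotGen i j (γ t)))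
    (fun i j t => force (toBil g) (γ t) (deriv γ t) (rotGen i j (γ t)) +
      toBil g (γ t) (deriv γ t) (rotGen i j (deriv γ t))) t0 hc0 hfar hR0 ?_ tm ⟨htmpos, htm0⟩
  · rwa [htm.1.2] at key
  · intro t ht
    obtain ⟨h1, h2, h3⟩ := geodesic_momenta hg hγ ⟨ht.1, ht.2.trans_lt ht0T⟩
    obtain ⟨hv, hP', hP, hQ⟩ := hpt (γ t) (deriv γ t) (hfar t (Ioc_subset_Icc_self ht)) h2
    exact ⟨h1, hv, h3 (ContinuousLinearMap.id ℝ (En n)), hP', hP, fun i j =>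
      ⟨h3 (rotGen i j), (hQ i j).1, (hQ i j).2⟩⟩

lemma geodesic_reverse {n : ℕ} {d : En n → En n → ℝ} {γ : ℝ → En n} {T : ℝ}
    (h : IsGeodesicOn d γ 1 (Icc 0 T)) : IsGeodesicOn d (fun t => γ (T - t)) 1 (Icc 0 T) := by
  have hI : ∀ t ∈ Icc 0 T, T - t ∈ Icc 0 T := fun t ht => ⟨by linarith [ht.2], by linarith [ht.1]⟩
  intro t ht
  obtain ⟨η, hη, hd⟩ := h (T - t) (hI t ht)
  refine ⟨η, hη, fun s hs u hu h1 h2 => ?_⟩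
  have e : ∀ a b : ℝ, |T - a - (T - b)| = |a - b| := fun a b => by
    rw [show T - a - (T - b) = -(a - b) by ring, abs_neg]
  rw [hd (T - s) (hI s hs) (T - u) (hI u hu) (by rwa [e]) (by rwa [e]), e]

lemma isLeast_reverse {n : ℕ} {γ : ℝ → En n} {T r tp : ℝ}
    (h : IsGreatest {t | t ∈ Icc 0 T ∧ ‖γ t‖ = r} tp) :
    IsLeast {t | t ∈ Icc 0 T ∧ ‖(fun t => γ (T - t)) t‖ = r} (T - tp) := by
  obtain ⟨⟨h1, h2⟩, h3⟩ := h
  refine ⟨⟨⟨by linarith [h1.2], by linarith [h1.1]⟩, by simpa using h2⟩, fun s hs => ?_⟩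
  have := h3 (⟨⟨by linarith [hs.1.2], by linarith [hs.1.1]⟩, hs.2⟩ :
    T - s ∈ {t | t ∈ Icc 0 T ∧ ‖γ t‖ = r})
  linarith

/-- Both ends of a geodesic from `ρ a` to `-ρ a` entering a fixed ball. -/
lemma two_ended {n : ℕ} {g : MetricTensor n} {α μ : ℝ} (hα : 0 < sin α) (hμ : 0 < μ)
    (hg : IsAsympConical n g α μ) (Rmin δ : ℝ) (hδ : 0 < δ) {a : En n} (ha : ‖a‖ = 1) :
    ∃ R : ℝ, Rmin ≤ R ∧ ∀ (γ : ℝ → En n) (T r ρ tm tp : ℝ),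
      IsGeodesicOn (rdist g) γ 1 (Icc 0 T) → γ 0 = ρ • a → γ T = -(ρ • a) →
      (∃ t ∈ Icc 0 T, ‖γ t‖ ≤ Rmin) → R < r → r < ρ →
      IsLeast {t | t ∈ Icc 0 T ∧ ‖γ t‖ = r} tm → IsGreatest {t | t ∈ Icc 0 T ∧ ‖γ t‖ = r} tp →
      ‖r⁻¹ • γ tm - a‖ + ‖r⁻¹ • γ tp + a‖ ≤ δ := by
  obtain ⟨R, K, ν, hν, hR, hRm, hdir⟩ := first_hit_direction hα hμ hg Rmin
  obtain ⟨R1, hR1, hsmall⟩ := exists_small_rpow hν K (δ / 2) (by positivity) R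
  refine ⟨R1, hRm.trans hR1, ?_⟩
  intro γ T r ρ tm tp hγ h0 hT hex hr hρ htm htp
  have hρ0 : 0 < ρ := by linarith
  have hn : ‖ρ • a‖ = ρ := by rw [norm_smul, ha, Real.norm_of_nonneg hρ0.le, mul_one]
  have hn' : ‖-(ρ • a)‖ = ρ := by rw [norm_neg, hn]
  have h1 := hdir γ T r tm hγ hex (by linarith) (by rwa [h0, hn]) (by rwa [hT, hn']) htm
  obtain ⟨t, ht, htR⟩ := hex
  have h2 := hdir (fun t => γ (T - t)) T r (T - tp) (geodesic_reverse hγ)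
    ⟨T - t, ⟨by linarith [ht.2], by linarith [ht.1]⟩, by simpa using htR⟩ (by linarith)
    (by simpa [hT, hn'] using hρ) (by simpa [h0, hn] using hρ) (isLeast_reverse htp)
  have h3 := hsmall r hr.le
  simp only [sub_sub_cancel, sub_zero] at h2
  rw [hT, hn', smul_neg, inv_smul_smul₀ hρ0.ne', sub_neg_eq_add] at h2
  rw [h0, hn, inv_smul_smul₀ hρ0.ne'] at h1
  linarith

end

/-- uniform non-twisting of the min-max geodesic segments.
In the setting of the min-max construction, with `Γ_ρ : [0, ℓ_g(Γ_ρ)] → M` the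
arc-length parametrised min-max geodesic segments from `ρa` to `-ρa` and
`C_minmax = sup_ρ dist(Γ_ρ, o) < ∞`, for every `δ > 0` there is `R_δ` such that for all
`r > R_δ` and `ρ > r`, the first entry time `t⁻` and last exit time `t⁺` of `Γ_ρ` on the
sphere `∂B(o,r)` satisfy `|Γ_ρ(t⁻)/r - a| + |Γ_ρ(t⁺)/r + a| ≤ δ`. -/
theorem statement_19
 (n : ℕ) (hn : 2 ≤ n) (g : MetricTensor n) (α μ ε Cs Rε Rκ : ℝ)
    (hα : α ∈ Set.Ioo 0 (π / 2))
    (hαk : ∀ k : ℕ, α ≠ Real.arcsin (1 / (2 * (k : ℝ) + 1)))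
    (hμ : 0 < μ) (hg : IsAsympConical n g α μ)
    (hproper : ProperExpAll g)
    (hε : 0 < ε) (hε' : ε < 1/2) (hCs : 1 ≤ Cs)
    (hεα : Real.sin (π / 2 * Real.sin α) ^ 2 < (1 - 5*Cs*ε)^2 / (1 + 5*Cs*ε)^2)
    (hRε : 0 < Rε)
    (hlen : ∀ γ : ℝ → En n, ContDiff ℝ 1 γ → (∀ t ∈ Set.Icc (0:ℝ) 1, Rε ≤ ‖γ t‖) →
      (1 - Cs*ε) * clen (coneMetric n α) γ 0 1 ≤ clen g γ 0 1 ∧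
      clen g γ 0 1 ≤ (1 + Cs*ε) * clen (coneMetric n α) γ 0 1)
    (hRκ : Rε ≤ Rκ)
    (hdist : ∀ x : En n, Rκ ≤ ‖x‖ →
      (1 - ε) * ‖x‖ ≤ rdist g 0 x ∧ rdist g 0 x ≤ (1 + ε) * ‖x‖)
    (hmins : ∀ x : En n, Rκ ≤ ‖x‖ → ∀ γ : ℝ → En n,
      IsMinSeg (coneDist n α) γ x (-x) → ∀ t ∈ Set.Icc (0:ℝ) 1, Rε ≤ ‖γ t‖)
    (a e : En n) (ha : ‖a‖ = 1) (he : ‖e‖ = 1) (hae : ⟪e, a⟫ = 0)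
    (L : ℝ → En n → ℝ → En n)
    (hL : ∀ ρ : ℝ, Rκ < ρ → ∀ ξ : En n, ‖ξ‖ = 1 → ⟪ξ, a⟫ = 0 →
      IsMinSeg (coneDist n α) (L ρ ξ) (ρ • a) (-(ρ • a)) ∧
      (∀ t ∈ Set.Icc (0:ℝ) 1, ∃ s r : ℝ, 0 ≤ r ∧ L ρ ξ t = s • a + r • ξ) ∧
      (∃ t ∈ Set.Icc (0:ℝ) 1, ∃ r : ℝ, 0 < r ∧ L ρ ξ t = r • ξ)) :
    let S : Set (En n) := {ξ | ‖ξ‖ = 1 ∧ ⟪ξ, a⟫ = 0}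
    let I : En n → En n := fun x => x - (2 * ⟪x, e⟫) • e
    let Mclass : ℝ → (En n → ℝ → ℝ → En n) → Prop := fun ρ H =>
      (∀ ξ ∈ S, ∀ s ∈ Set.Icc (0:ℝ) 1,
        ContDiff ℝ 1 (H ξ s) ∧ H ξ s 0 = ρ • a ∧ H ξ s 1 = -(ρ • a)) ∧
      (∀ ξ ∈ S, H ξ 0 = L ρ ξ ∧ H ξ 1 = L ρ (I ξ)) ∧
      ContinuousOn (fun z : En n × ℝ × ℝ => H z.1 z.2.1 z.2.2)
        (S ×ˢ (Set.Icc 0 1 ×ˢ Set.Icc 0 1))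
    let Λ : ℝ → ℝ := fun ρ => sInf {m : ℝ | ∃ H, Mclass ρ H ∧
      IsLUB {E : ℝ | ∃ ξ ∈ S, ∃ s ∈ Set.Icc (0:ℝ) 1, E = cenergy g (H ξ s) 0 1} m}
    ∀ (Γfam : ℝ → ℝ → En n) (T : ℝ → ℝ) (Cmm : ℝ),
      (∀ ρ : ℝ, Rκ < ρ → 0 < T ρ ∧
        Γfam ρ 0 = ρ • a ∧ Γfam ρ (T ρ) = -(ρ • a) ∧
        IsGeodesicOn (rdist g) (Γfam ρ) 1 (Set.Icc 0 (T ρ)) ∧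
        (T ρ)^2 = Λ ρ) →
      (∀ ρ : ℝ, Rκ < ρ → ∃ t ∈ Set.Icc 0 (T ρ), ‖Γfam ρ t‖ ≤ Cmm) →
      ∀ δ > (0:ℝ), ∃ Rδ : ℝ, max Rκ Cmm ≤ Rδ ∧
        ∀ r : ℝ, Rδ < r → ∀ ρ : ℝ, r < ρ → ∀ tm tp : ℝ,
          IsLeast {t : ℝ | t ∈ Set.Icc 0 (T ρ) ∧ ‖Γfam ρ t‖ = r} tm →
          IsGreatest {t : ℝ | t ∈ Set.Icc 0 (T ρ) ∧ ‖Γfam ρ t‖ = r} tp →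
          ‖r⁻¹ • Γfam ρ tm - a‖ + ‖r⁻¹ • Γfam ρ tp + a‖ ≤ δ := by
  intro S I Mclass Λ Γfam T Cmm hΓ hC δ hδ
  have hsin : 0 < Real.sin α :=
    Real.sin_pos_of_pos_of_lt_pi hα.1 (by linarith [hα.2, Real.pi_pos])
  obtain ⟨R, hR, h⟩ := two_ended hsin hμ hg (max Rκ Cmm) δ hδ ha
  refine ⟨R, hR, fun r hr ρ hρ tm tp htm htp => ?_⟩
  have hρκ : Rκ < ρ := by linarith [le_max_left Rκ Cmm]
  obtain ⟨-, h0, hT, hgeo, -⟩ := hΓ ρ hρκ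
  obtain ⟨t, ht, htC⟩ := hC ρ hρκ
  exact h (Γfam ρ) (T ρ) r ρ tm tp hgeo h0 hT ⟨t, ht, htC.trans (le_max_right _ _)⟩ hr hρ htm htp
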